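/- For every n ≥ 9, the symmetric function p_{(1^n)} + p_{(2,1^{n−2})} + p_{(2,2,1^{n−4})} + p_{(n−2,2)} is Schur-positive; that is, its expansion in the Schur basis {s_λ : λ ⊢ n} has nonnegative coefficients. -/

import Mathlib

open Finset MvPolynomial

/-- A partition of `n`, represented as a weakly decreasing list of positive
integers summing to `n`. -/
def IsPartitionOf (n : ℕ) (l : List ℕ) : Prop :=
  l.Pairwise (· ≥ ·) ∧ (∀ x ∈ l, 0 < x) ∧ l.sum = n

/-- `T : ℕ → ℕ → ℕ` is a semistandard Young tableau of shape `l`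
(rows weakly increase, columns strictly increase, entries are `0` outside
of the diagram; entries are 0-indexed, so entry value `k` stands for the
letter `k+1`). -/
def IsSSYT (l : List ℕ) (T : ℕ → ℕ → ℕ) : Prop :=
  (∀ i j1 j2, j1 ≤ j2 → j2 < l.getD i 0 → T i j1 ≤ T i j2) ∧
  (∀ i1 i2 j, i1 < i2 → j < l.getD i2 0 → T i1 j < T i2 j) ∧
  (∀ i j, l.getD i 0 ≤ j → T i j = 0)

/-- The tableau `T` of shape `l` has content `ν`: for every `k`, the number of
cells of the diagram of `l` whose entry is `k` equals the `(k+1)`-st part of `ν`. -/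
def HasContent (l : List ℕ) (T : ℕ → ℕ → ℕ) (ν : List ℕ) : Prop :=
  ∀ k, Nat.card {c : ℕ × ℕ // c.2 < l.getD c.1 0 ∧ T c.1 c.2 = k} = ν.getD k 0

/-- The Kostka number `K_{l,ν}`: the number of semistandard Young tableaux of
shape `l` and content `ν`. -/
noncomputable def kostka (l ν : List ℕ) : ℕ :=
  Nat.card {T : ℕ → ℕ → ℕ // IsSSYT l T ∧ HasContent l T ν}

/-- `f^λ`, the number of standard Young tableaux of shape `l`. -/
noncomputable def fSYT (l : List ℕ) : ℕ := kostka l (List.replicate l.sum 1)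

/-- Dominance order: all partial sums of `l` are at most those of `m`. -/
def DomLE (l m : List ℕ) : Prop := ∀ k, (l.take k).sum ≤ (m.take k).sum

/-- The standard immersion order: dominance together with `f^λ ≤ f^μ`. -/
def StdLE (l m : List ℕ) : Prop := DomLE l m ∧ fSYT l ≤ fSYT m

/-- Strict standard immersion order. -/
def StdLT (l m : List ℕ) : Prop := StdLE l m ∧ l ≠ m

/-- `m` covers `l` in the standard immersion poset on partitions of `n`. -/
def StdCovBy (n : ℕ) (l m : List ℕ) : Prop :=
  StdLT l m ∧ ∀ ν, IsPartitionOf n ν → StdLT l ν → ¬ StdLT ν m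

/-- `l` is a maximal element of the standard immersion poset on partitions of `n`. -/
def StdMaximal (n : ℕ) (l : List ℕ) : Prop :=
  ∀ m, IsPartitionOf n m → m ≠ l → ¬ StdLE l m

/-- The immersion order on partitions of `n`: `l ≤_I m` iff
`K_{l,α} ≤ K_{m,α}` for every partition `α` of `n`. -/
def ImmersionLE (n : ℕ) (l m : List ℕ) : Prop :=
  ∀ ν, IsPartitionOf n ν → kostka l ν ≤ kostka m ν

/-- Strict immersion order. -/
def ImmersionLT (n : ℕ) (l m : List ℕ) : Prop := ImmersionLE n l m ∧ l ≠ m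

/-- `m` covers `l` in the immersion poset on partitions of `n`. -/
def ImmersionCovBy (n : ℕ) (l m : List ℕ) : Prop :=
  ImmersionLT n l m ∧ ∀ ν, IsPartitionOf n ν → ImmersionLT n l ν → ¬ ImmersionLT n ν m

/-- The monomial symmetric polynomial `m_l` in `N` variables associated to a
partition `l` of `n`: the sum of `x^α` over all distinct exponent vectors `α`
whose nonzero entries are a rearrangement of the parts of `l`. -/
noncomputable def msymmList (N n : ℕ) (l : List ℕ) : MvPolynomial (Fin N) ℤ :=
  ∑ α ∈ (Fintype.piFinset fun _ : Fin N => Finset.range (n + 1)) |>.filter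
      (fun α => Multiset.filter (fun x => x ≠ 0) (Multiset.map α Finset.univ.val)
        = (↑l : Multiset ℕ)),
    MvPolynomial.monomial (Finsupp.equivFunOnFinite.symm α) (1 : ℤ)

/-- The parts of a `Nat.Partition` listed in weakly decreasing order. -/
def sortedParts {n : ℕ} (μ : Nat.Partition n) : List ℕ :=
  (μ.parts.sort (· ≤ ·)).reverse

/-- The Schur polynomial in `N` variables of a partition `l` of `n`, defined via
`s_l = ∑_{μ ⊢ n} K_{l,μ} m_μ`. -/
noncomputable def schurP (N n : ℕ) (l : List ℕ) : MvPolynomial (Fin N) ℤ :=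
  ∑ μ : Nat.Partition n, (kostka l (sortedParts μ) : ℤ) • msymmList N n (sortedParts μ)

/-- A symmetric polynomial of degree `n` is monomial-positive if it is a
nonnegative integer combination of the monomial symmetric polynomials `m_μ`, `μ ⊢ n`. -/
def MonomialPos (N n : ℕ) (f : MvPolynomial (Fin N) ℤ) : Prop :=
  ∃ c : Nat.Partition n → ℕ,
    f = ∑ μ : Nat.Partition n, (c μ : ℤ) • msymmList N n (sortedParts μ)

/-- The power sum symmetric polynomial `p_l = p_{l_1} p_{l_2} ⋯` in `N` variables. -/
noncomputable def powerSum (N : ℕ) (l : List ℕ) : MvPolynomial (Fin N) ℤ :=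
  (l.map fun r => ∑ i : Fin N, (X i : MvPolynomial (Fin N) ℤ) ^ r).prod

/-!
Multiply a symmetric polynomial by the Vandermonde determinant `Δ`. Since `s_λ Δ` is the alternant
with exponents `λ_i + N - i`, the coefficient of `s_λ` becomes the coefficient at this exponent
vector, the `β`-set of `λ` (Frobenius' formula), and multiplying by `p_r` sums over all ways of
lowering one entry of the `β`-set by `r`. The Schur polynomials are given by counting tableaux; they
match the ratios of alternants because both satisfy the branching rule that strips one variable.

For `p_{(n-2,2)}` these coefficients are at least `-1`: when `n ≠ 4` the two cycle lengths differ,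
and after removing both cycles from a `β`-set almost all terms vanish or cancel in pairs. The other
three summands add up to `p_1 ^ (n - 4) (p_1 ^ 4 + p_2 p_1 ^ 2 + p_2 ^ 2)`. Its coefficients are at
least `1` for `n = 4`, and this persists under multiplication by `p_1` because a nonempty diagram
always has a removable box. Hence the sum has nonnegative coefficients.
-/

section Coefficients

variable {N : ℕ}

/-- The coefficient of `x ^ γ` in `P` for an integer exponent vector `γ`; it is `0` when `γ` has a
negative entry, so that multiplying by a monomial is always a translation of exponents. -/
noncomputable def intCoeff (P : MvPolynomial (Fin N) ℤ) (γ : Fin N → ℤ) : ℤ :=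
  if ∀ i, 0 ≤ γ i then coeff (Finsupp.equivFunOnFinite.symm fun i => (γ i).toNat) P else 0

theorem intCoeff_natCast (P : MvPolynomial (Fin N) ℤ) (α : Fin N → ℕ) :
    intCoeff P (fun i => (α i : ℤ)) = coeff (Finsupp.equivFunOnFinite.symm α) P := by
  rw [intCoeff, if_pos fun i => Int.natCast_nonneg (α i)]
  simp only [Int.toNat_natCast]

theorem exists_natCast_eq {γ : Fin N → ℤ} (hγ : 0 ≤ γ) : ∃ α : Fin N → ℕ, γ = fun i => (α i : ℤ) :=
  ⟨fun i => (γ i).toNat, funext fun i => (Int.toNat_of_nonneg (hγ i)).symm⟩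

theorem intCoeff_of_not_nonneg (P : MvPolynomial (Fin N) ℤ) {γ : Fin N → ℤ} (h : ¬0 ≤ γ) :
    intCoeff P γ = 0 :=
  if_neg h

theorem nonneg_of_intCoeff_ne_zero {P : MvPolynomial (Fin N) ℤ} {γ : Fin N → ℤ}
    (h : intCoeff P γ ≠ 0) : 0 ≤ γ :=
  not_imp_comm.1 (intCoeff_of_not_nonneg P) h

theorem intCoeff_ext {P Q : MvPolynomial (Fin N) ℤ} (h : ∀ γ, intCoeff P γ = intCoeff Q γ) :
    P = Q := by
  ext d
  simpa only [intCoeff_natCast, Finsupp.equivFunOnFinite_symm_coe] using h fun i => (d i : ℤ)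

theorem intCoeff_smul (a : ℤ) (P : MvPolynomial (Fin N) ℤ) (γ : Fin N → ℤ) :
    intCoeff (a • P) γ = a * intCoeff P γ := by
  unfold intCoeff
  split_ifs
  · rw [coeff_smul, smul_eq_mul]
  · rw [mul_zero]

theorem intCoeff_sum {ι : Type*} (s : Finset ι) (P : ι → MvPolynomial (Fin N) ℤ) (γ : Fin N → ℤ) :
    intCoeff (∑ a ∈ s, P a) γ = ∑ a ∈ s, intCoeff (P a) γ := by
  unfold intCoeff
  split_ifs
  · rw [coeff_sum]
  · simp

theorem intCoeff_X_pow_mul (i : Fin N) (r : ℕ) (P : MvPolynomial (Fin N) ℤ) (γ : Fin N → ℤ) :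
    intCoeff (X i ^ r * P) γ = intCoeff P (γ - Pi.single i (r : ℤ)) := by
  by_cases hγ : 0 ≤ γ
  · obtain ⟨α, rfl⟩ := exists_natCast_eq hγ
    rw [intCoeff_natCast, X_pow_eq_monomial, coeff_monomial_mul', one_mul]
    by_cases hr : r ≤ α i
    · have hshift : (fun j => (α j : ℤ)) - Pi.single i (r : ℤ) =
          fun j => ((α - Pi.single i r : Fin N → ℕ) j : ℤ) := by
        funext j
        obtain rfl | hj := eq_or_ne j i <;> simp [*]
      rw [hshift, intCoeff_natCast, if_pos (by simpa using hr)]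
      congr 1
      ext j
      obtain rfl | hj := eq_or_ne j i <;> simp [*]
    · rw [if_neg (by simpa using hr), intCoeff_of_not_nonneg]
      intro h
      simpa [hr] using h i
  · rw [intCoeff_of_not_nonneg _ hγ, intCoeff_of_not_nonneg]
    refine fun h => hγ fun j => (h j).trans ?_
    obtain rfl | hj := eq_or_ne j i <;> simp [*]

theorem intCoeff_powerSum_mul (r : ℕ) (P : MvPolynomial (Fin N) ℤ) (γ : Fin N → ℤ) :
    intCoeff ((∑ i : Fin N, X i ^ r) * P) γ = ∑ i, intCoeff P (γ - Pi.single i (r : ℤ)) := by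
  simp only [sum_mul, intCoeff_sum, intCoeff_X_pow_mul]

theorem sum_eq_of_intCoeff_ne_zero {P : MvPolynomial (Fin N) ℤ} {d : ℕ} (hP : P.IsHomogeneous d)
    {γ : Fin N → ℤ} (h : intCoeff P γ ≠ 0) : ∑ i, γ i = d := by
  obtain ⟨α, rfl⟩ := exists_natCast_eq (nonneg_of_intCoeff_ne_zero h)
  rw [intCoeff_natCast] at h
  by_contra hne
  refine h (hP.coeff_eq_zero fun hd => hne ?_)
  rw [Finsupp.degree_eq_sum] at hd
  rw [← hd, Nat.cast_sum]
  rfl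

theorem intCoeff_rename_comp (σ : Equiv.Perm (Fin N)) (P : MvPolynomial (Fin N) ℤ)
    (γ : Fin N → ℤ) : intCoeff (rename σ P) γ = intCoeff P (γ ∘ σ) := by
  simp only [intCoeff, Function.comp_apply, σ.surjective.forall (p := fun i => 0 ≤ γ i)]
  congr 1
  rw [← coeff_rename_mapDomain σ σ.injective P]
  congr 1
  ext i
  obtain ⟨j, rfl⟩ := σ.surjective i
  simp [Finsupp.mapDomain_apply σ.injective]

/-- A polynomial is alternating if permuting its variables multiplies it by the sign of the
permutation. -/
def IsAlternating (P : MvPolynomial (Fin N) ℤ) : Prop :=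
  ∀ σ : Equiv.Perm (Fin N), rename σ P = (Equiv.Perm.sign σ : ℤ) • P

namespace IsAlternating

variable {P Q : MvPolynomial (Fin N) ℤ}

theorem intCoeff_comp_perm (hP : IsAlternating P) (γ : Fin N → ℤ) (σ : Equiv.Perm (Fin N)) :
    intCoeff P (γ ∘ σ) = (Equiv.Perm.sign σ : ℤ) * intCoeff P γ := by
  rw [← intCoeff_rename_comp, hP σ, intCoeff_smul]

theorem intCoeff_comp_swap (hP : IsAlternating P) (γ : Fin N → ℤ) {a b : Fin N} (hab : a ≠ b) :
    intCoeff P (γ ∘ Equiv.swap a b) = -intCoeff P γ := by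
  rw [hP.intCoeff_comp_perm, Equiv.Perm.sign_swap hab]
  simp

theorem injective_of_intCoeff_ne_zero (hP : IsAlternating P) {γ : Fin N → ℤ}
    (h : intCoeff P γ ≠ 0) : Function.Injective γ := by
  intro a b hab
  by_contra hne
  have hγ : γ ∘ Equiv.swap a b = γ := by
    rw [Equiv.comp_swap_eq_update, hab, Function.update_eq_self, ← hab, Function.update_eq_self]
  have := hP.intCoeff_comp_swap γ hne
  rw [hγ] at this
  omega

theorem symmetric_mul (hQ : Q.IsSymmetric) (hP : IsAlternating P) : IsAlternating (Q * P) := by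
  intro σ
  rw [map_mul, hQ σ, hP σ, mul_smul_comm]

theorem ext_strictMono (hP : IsAlternating P) (hQ : IsAlternating Q)
    (h : ∀ γ, StrictMono γ → 0 ≤ γ → intCoeff P γ = intCoeff Q γ) : P = Q := by
  refine intCoeff_ext fun γ => ?_
  by_contra hne
  have hγ : Function.Injective γ ∧ 0 ≤ γ := by
    by_cases h0 : intCoeff P γ = 0
    · have hQ0 : intCoeff Q γ ≠ 0 := fun hq => hne (h0.trans hq.symm)
      exact ⟨hQ.injective_of_intCoeff_ne_zero hQ0, nonneg_of_intCoeff_ne_zero hQ0⟩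
    · exact ⟨hP.injective_of_intCoeff_ne_zero h0, nonneg_of_intCoeff_ne_zero h0⟩
  have hsort := h (γ ∘ Tuple.sort γ)
    ((Tuple.monotone_sort γ).strictMono_of_injective (hγ.1.comp (Tuple.sort γ).injective))
    fun i => hγ.2 _
  rw [hP.intCoeff_comp_perm, hQ.intCoeff_comp_perm] at hsort
  exact hne (mul_left_cancel₀ (Units.ne_zero _) hsort)

end IsAlternating

end Coefficients

section Alternants

variable {N : ℕ}

/-- The alternant `det (x_i ^ b_j)`, the numerator of the bialternant formula. -/
noncomputable def alternant (b : Fin N → ℕ) : MvPolynomial (Fin N) ℤ :=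
  Matrix.det (Matrix.of fun i j => X i ^ b j)

/-- The Vandermonde determinant `∏_{i < j} (x_j - x_i)`, that is, the alternant with exponents
`0, 1, …, N - 1`. -/
noncomputable def vandermonde (N : ℕ) : MvPolynomial (Fin N) ℤ :=
  alternant fun j => (j : ℕ)

theorem vandermonde_ne_zero (N : ℕ) : vandermonde N ≠ 0 :=
  Matrix.det_vandermonde_ne_zero_iff.2 (X_injective (σ := Fin N) (R := ℤ))

theorem isAlternating_alternant (b : Fin N → ℕ) : IsAlternating (alternant b) := by
  intro σ
  rw [alternant, AlgHom.map_det, zsmul_eq_mul, ← Matrix.det_permute]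
  congr 1
  ext1 i j
  simp

theorem alternant_eq_sum_monomial (b : Fin N → ℕ) :
    alternant b = ∑ σ : Equiv.Perm (Fin N),
      (Equiv.Perm.sign σ : ℤ) • monomial (Finsupp.equivFunOnFinite.symm (b ∘ σ)) (1 : ℤ) := by
  rw [alternant, ← Matrix.det_transpose, Matrix.det_apply]
  refine sum_congr rfl fun σ _ => ?_
  rw [monomial_eq, Finsupp.prod_fintype _ _ fun i => pow_zero _]
  simp [Units.smul_def]

theorem isHomogeneous_alternant (b : Fin N → ℕ) : (alternant b).IsHomogeneous (∑ j, b j) := by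
  rw [alternant_eq_sum_monomial]
  refine IsHomogeneous.sum _ _ _ fun σ _ => ?_
  rw [← mem_homogeneousSubmodule]
  refine zsmul_mem (isHomogeneous_monomial _ ?_) _
  rw [Finsupp.degree_eq_sum]
  exact Equiv.sum_comp σ b

theorem intCoeff_monomial (α : Fin N → ℕ) (γ : Fin N → ℤ) :
    intCoeff (monomial (Finsupp.equivFunOnFinite.symm α) 1) γ =
      if ∀ i, γ i = α i then 1 else 0 := by
  by_cases hγ : 0 ≤ γ
  · obtain ⟨β, rfl⟩ := exists_natCast_eq hγ
    rw [intCoeff_natCast, coeff_monomial]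
    simp only [EmbeddingLike.apply_eq_iff_eq, funext_iff, Nat.cast_inj, eq_comm]
  · rw [intCoeff_of_not_nonneg _ hγ, if_neg]
    exact fun h => hγ fun i => (h i).symm ▸ Int.natCast_nonneg _

theorem intCoeff_alternant (b : Fin N → ℕ) (γ : Fin N → ℤ) :
    intCoeff (alternant b) γ =
      Matrix.det (Matrix.of fun i j => if γ i = b j then (1 : ℤ) else 0) := by
  rw [alternant_eq_sum_monomial, intCoeff_sum, ← Matrix.det_transpose, Matrix.det_apply]
  refine sum_congr rfl fun σ _ => ?_
  rw [intCoeff_smul, intCoeff_monomial, Units.smul_def, smul_eq_mul]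
  simp only [Matrix.transpose_apply, Matrix.of_apply, prod_ite_zero, prod_const_one, mem_univ,
    forall_const, Function.comp_apply]

theorem intCoeff_alternant_of_strictMono {b : Fin N → ℕ} {γ : Fin N → ℤ} (hb : StrictMono b)
    (hγ : StrictMono γ) : intCoeff (alternant b) γ = if ∀ i, γ i = b i then 1 else 0 := by
  rw [alternant_eq_sum_monomial, intCoeff_sum, sum_eq_single 1]
  · simp [intCoeff_monomial]
  · intro σ _ hσ
    rw [intCoeff_smul, intCoeff_monomial, if_neg, mul_zero]
    refine fun h => hσ (Equiv.ext fun i => ?_)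
    have hmono : StrictMono σ := fun i j hij => hb.lt_iff_lt.1 (by
      have := hγ hij
      rw [h, h] at this
      exact_mod_cast this)
    exact congrFun hmono.eq_id i
  · simp

end Alternants

section Determinants

variable {R : Type*} [CommRing R]

theorem det_of_sum_mul {n ι : Type*} [Fintype n] [DecidableEq n] (s : n → Finset ι)
    (c : n → ι → R) (A : n → ι → R) :
    Matrix.det (Matrix.of fun i j => ∑ m ∈ s j, c j m * A i m) =
      ∑ m ∈ Fintype.piFinset s, (∏ j, c j (m j)) * Matrix.det (Matrix.of fun i j => A i (m j)) := by
  have hcols : (Matrix.of fun i j => ∑ m ∈ s j, c j m * A i m).transpose =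
      fun j => ∑ m ∈ s j, fun i => c j m * A i m := by
    ext j i
    simp
  rw [← Matrix.det_transpose, hcols]
  refine ((Matrix.detRowAlternating (n := n) (R := R)).toMultilinearMap.map_sum_finset
    (fun j m i => c j m * A i m) s).trans (sum_congr rfl fun m _ => ?_)
  rw [← Matrix.det_mul_row, ← Matrix.det_transpose]
  rfl

-- Subtracting `x_0 ^ (b_{j+1} - b_j)` times each column from the next one clears the first row and
-- leaves geometric sums times `x_i - x_0`.
theorem det_pow_succ {N : ℕ} (x : Fin (N + 1) → R) (b : Fin (N + 1) → ℕ)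
    (hb : ∀ j : Fin N, b j.castSucc ≤ b j.succ) :
    Matrix.det (Matrix.of fun i j => x i ^ b j) =
      x 0 ^ b 0 * ((∏ i : Fin N, (x i.succ - x 0)) *
        Matrix.det (Matrix.of fun i j : Fin N => ∑ m ∈ Ico (b j.castSucc) (b j.succ),
          x 0 ^ (b j.succ - 1 - m) * x i.succ ^ m)) := by
  let B : Matrix (Fin (N + 1)) (Fin (N + 1)) R := Matrix.of fun i =>
    Fin.cons (x i ^ b 0) fun j => (x i - x 0) *
      ∑ m ∈ Ico (b j.castSucc) (b j.succ), x 0 ^ (b j.succ - 1 - m) * x i ^ m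
  have hB : Matrix.det (Matrix.of fun i j => x i ^ b j) = B.det := by
    refine Matrix.det_eq_of_forall_col_eq_smul_add_pred
      (fun j => x 0 ^ (b j.succ - b j.castSucc)) (fun i => rfl) fun i j => ?_
    have hgeom := (Commute.all (x i) (x 0)).geom_sum₂_Ico_mul (hb j)
    simp only [B, Matrix.of_apply, Fin.cons_succ, mul_comm (x 0 ^ _) (x i ^ _),
      mul_comm (x i - x 0), hgeom]
    ring
  have hrow : ∀ j : Fin N, B 0 j.succ = 0 := fun j => by simp [B]
  have hminor : B.submatrix Fin.succ Fin.succ = Matrix.of fun i j => (x i.succ - x 0) *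
      (Matrix.of fun i j : Fin N => ∑ m ∈ Ico (b j.castSucc) (b j.succ),
        x 0 ^ (b j.succ - 1 - m) * x i.succ ^ m) i j := rfl
  rw [hB, Matrix.det_succ_row_zero, Fin.sum_univ_succ]
  simp only [hrow, mul_zero, zero_mul, sum_const_zero, add_zero, Fin.succAbove_zero, hminor,
    Matrix.det_mul_column]
  simp [B]

end Determinants

section Bialternant

variable {N : ℕ}

/-- The vectors interlacing `l`. Partitions are recorded here as weakly increasing vectors, so this
is the set of all partitions obtained from `l` by removing a horizontal strip. -/
def interlacing (l : Fin (N + 1) → ℕ) : Finset (Fin N → ℕ) :=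
  Fintype.piFinset fun j => Icc (l j.castSucc) (l j.succ)

theorem mem_interlacing {l : Fin (N + 1) → ℕ} {μ : Fin N → ℕ} :
    μ ∈ interlacing l ↔ ∀ j, l j.castSucc ≤ μ j ∧ μ j ≤ l j.succ := by
  simp only [interlacing, Fintype.mem_piFinset, mem_Icc]

theorem monotone_of_mem_interlacing {l : Fin (N + 1) → ℕ} {μ : Fin N → ℕ} (hl : Monotone l)
    (hμ : μ ∈ interlacing l) : Monotone μ := by
  intro i j hij
  obtain rfl | hlt := hij.eq_or_lt
  · rfl
  · exact (mem_interlacing.1 hμ i).2.trans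
      ((hl (Fin.succ_le_castSucc_iff.2 hlt)).trans (mem_interlacing.1 hμ j).1)

/-- The Schur polynomial of the partition with parts `l`, weakly increasing, defined by the
branching rule: the variable `x_0` records the sizes of the horizontal strips removed. -/
noncomputable def branchingSchur : (N : ℕ) → (Fin N → ℕ) → MvPolynomial (Fin N) ℤ
  | 0, _ => 1
  | N + 1, l => ∑ μ ∈ interlacing l,
      rename Fin.succ (branchingSchur N μ) * X 0 ^ (l 0 + ∑ j : Fin N, (l j.succ - μ j))

theorem rename_succ_alternant (b : Fin N → ℕ) :
    rename Fin.succ (alternant b) = Matrix.det (Matrix.of fun i j : Fin N =>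
      (X i.succ : MvPolynomial (Fin (N + 1)) ℤ) ^ b j) := by
  rw [alternant, AlgHom.map_det]
  congr 1
  ext1 i j
  simp

theorem alternant_succ {l : Fin (N + 1) → ℕ} (hl : Monotone l) :
    alternant (fun j => l j + j) = (∏ i : Fin N, (X i.succ - X 0)) * ∑ μ ∈ interlacing l,
      rename Fin.succ (alternant fun j => μ j + j) *
        X 0 ^ (l 0 + ∑ j : Fin N, (l j.succ - μ j)) := by
  have hstep : ∀ j : Fin N, l j.castSucc ≤ l j.succ := fun j => hl (Fin.castSucc_le_succ j)
  rw [alternant, det_pow_succ _ _ fun j => by grind [hstep j], det_of_sum_mul, mul_left_comm,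
    mul_sum]
  congr 1
  symm
  refine sum_bij' (fun μ _ j => μ j + (j : ℕ)) (fun m _ j => m j - (j : ℕ)) ?_ ?_ ?_ ?_ ?_
  · intro μ hμ
    rw [mem_interlacing] at hμ
    simp only [Fintype.mem_piFinset, mem_Ico, Fin.val_castSucc, Fin.val_succ]
    intro j
    have := hμ j
    omega
  · intro m hm
    simp only [Fintype.mem_piFinset, mem_Ico, Fin.val_castSucc, Fin.val_succ] at hm
    rw [mem_interlacing]
    intro j
    have := hm j
    omega
  · intro μ _
    simp
  · intro m hm
    simp only [Fintype.mem_piFinset, mem_Ico, Fin.val_castSucc] at hm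
    funext j
    exact Nat.sub_add_cancel (le_of_add_le_right (hm j).1)
  · intro μ _
    have hexp : ∀ j : Fin N, l j.succ + (j.succ : ℕ) - 1 - (μ j + j) = l j.succ - μ j := by
      intro j
      rw [Fin.val_succ]
      omega
    simp only [hexp, prod_pow_eq_pow_sum, rename_succ_alternant, pow_add, Fin.val_zero,
      pow_zero, mul_one]
    ring

theorem vandermonde_succ (N : ℕ) :
    vandermonde (N + 1) =
      (∏ i : Fin N, (X i.succ - X 0)) * rename Fin.succ (vandermonde N) := by
  have hmem : interlacing (0 : Fin (N + 1) → ℕ) = {0} := by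
    ext μ
    simp [mem_interlacing, funext_iff]
  simpa [hmem, vandermonde] using alternant_succ (N := N) (l := 0) monotone_const

theorem alternant_eq_vandermonde_mul {l : Fin N → ℕ} (hl : Monotone l) :
    alternant (fun j => l j + j) = vandermonde N * branchingSchur N l := by
  induction N with
  | zero => simp [branchingSchur, alternant, vandermonde]
  | succ N ih =>
    rw [alternant_succ hl, vandermonde_succ, branchingSchur, mul_assoc,
      mul_sum _ _ (rename Fin.succ (vandermonde N))]
    refine congrArg _ (sum_congr rfl fun μ hμ => ?_)
    rw [ih (monotone_of_mem_interlacing hl hμ), map_mul, mul_assoc]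

theorem isSymmetric_branchingSchur {l : Fin N → ℕ} (hl : Monotone l) :
    (branchingSchur N l).IsSymmetric := fun σ => by
  have h := isAlternating_alternant (fun j => l j + (j : ℕ)) σ
  rw [alternant_eq_vandermonde_mul hl, map_mul, vandermonde, isAlternating_alternant _ σ,
    ← smul_mul_assoc] at h
  exact mul_left_cancel₀ (smul_ne_zero (Units.ne_zero _) (vandermonde_ne_zero N)) h

theorem isHomogeneous_branchingSchur (l : Fin N → ℕ) :
    (branchingSchur N l).IsHomogeneous (∑ j, l j) := by
  induction N with
  | zero => simpa [branchingSchur] using isHomogeneous_one (Fin 0) ℤ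
  | succ N ih =>
    refine IsHomogeneous.sum _ _ _ fun μ hμ => ?_
    have hdeg : ∑ j, l j = ∑ j, μ j + (l 0 + ∑ j : Fin N, (l j.succ - μ j)) := by
      rw [Fin.sum_univ_succ, add_left_comm, ← sum_add_distrib]
      exact congrArg _ (sum_congr rfl fun j _ =>
        (Nat.add_sub_of_le (mem_interlacing.1 hμ j).2).symm)
    rw [hdeg]
    exact (ih μ).rename_isHomogeneous.mul (isHomogeneous_X_pow 0 _)

end Bialternant

section Tableaux

variable {N : ℕ} {L M A : ℕ → ℕ} {T : ℕ → ℕ → ℕ}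

/-- `T` is a semistandard tableau of shape `L` and content `A`: the conjunction of `IsSSYT` and
`HasContent`, with shape and content given as functions rather than lists, which makes it easier to
cut them down. -/
structure IsTableau (L A : ℕ → ℕ) (T : ℕ → ℕ → ℕ) : Prop where
  row_le : ∀ i j₁ j₂, j₁ ≤ j₂ → j₂ < L i → T i j₁ ≤ T i j₂
  col_lt : ∀ i₁ i₂ j, i₁ < i₂ → j < L i₂ → T i₁ j < T i₂ j
  eq_zero : ∀ i j, L i ≤ j → T i j = 0
  card_eq : ∀ k, Nat.card {c : ℕ × ℕ // c.2 < L c.1 ∧ T c.1 c.2 = k} = A k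

theorem kostka_eq_card (l ν : List ℕ) :
    kostka l ν = Nat.card {T // IsTableau (l.getD · 0) (ν.getD · 0) T} :=
  Nat.card_congr (Equiv.subtypeEquivRight fun _ =>
    ⟨fun h => ⟨h.1.1, h.1.2.1, h.1.2.2, h.2⟩, fun h => ⟨⟨h.1, h.2, h.3⟩, h.4⟩⟩)

theorem finite_cells (hL : ∀ r, N ≤ r → L r = 0) : {c : ℕ × ℕ | c.2 < L c.1}.Finite := by
  refine ((Set.finite_Iio N).biUnion fun r _ =>
    (Set.finite_Iio (L r)).image (Prod.mk r)).subset fun c hc => ?_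
  have hrow : c.1 < N := by
    by_contra h
    rw [Set.mem_ofPred_eq, hL _ (not_lt.1 h)] at hc
    exact Nat.not_lt_zero _ hc
  exact Set.mem_biUnion hrow ⟨c.2, hc, rfl⟩

theorem card_skew_cells (hL : ∀ r, N ≤ r → L r = 0) :
    Nat.card {c : ℕ × ℕ // M c.1 ≤ c.2 ∧ c.2 < L c.1} = ∑ r ∈ range N, (L r - M r) := by
  rw [Nat.subtype_card
    (((range N).sigma fun r => Ico (M r) (L r)).map (Equiv.sigmaEquivProd ℕ ℕ).toEmbedding)]
  · simp
  · intro c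
    have := hL c.1
    simp only [mem_map_equiv, Equiv.sigmaEquivProd_symm_apply, mem_sigma, mem_range, mem_Ico]
    omega

namespace IsTableau

theorem entry_lt (hT : IsTableau L A T) (hL : ∀ r, N ≤ r → L r = 0) (hA : ∀ k, N ≤ k → A k = 0)
    {r j : ℕ} (hj : j < L r) : T r j < N := by
  by_contra h
  have hcard := hT.card_eq (T r j)
  rw [hA _ (not_lt.1 h)] at hcard
  have : Finite {c : ℕ × ℕ // c.2 < L c.1 ∧ T c.1 c.2 = T r j} :=
    ((finite_cells hL).subset fun _ hc => hc.1).to_subtype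
  exact (Finite.card_eq_zero_iff.1 hcard).false ⟨(r, j), hj, rfl⟩

theorem row_index_le (hT : IsTableau L A T) (hL : Antitone L) {r j : ℕ} (hj : j < L r) :
    r ≤ T r j := by
  induction r with
  | zero => exact Nat.zero_le _
  | succ r ih =>
    exact (ih (hj.trans_le (hL r.le_succ))).trans_lt (hT.col_lt r (r + 1) j r.lt_succ_self hj)

theorem finite (hL : ∀ r, N ≤ r → L r = 0) (hA : ∀ k, N ≤ k → A k = 0) :
    Finite {T // IsTableau L A T} := by
  have := (finite_cells hL).to_subtype
  refine Finite.of_injective (β := {c : ℕ × ℕ | c.2 < L c.1} → Fin N)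
    (fun T c => ⟨T.1 c.1.1 c.1.2, T.2.entry_lt hL hA c.2⟩) fun T T' h => Subtype.ext ?_
  funext r j
  by_cases hj : j < L r
  · exact congrArg Fin.val (congrFun h ⟨(r, j), hj⟩)
  · rw [T.2.eq_zero _ _ (not_lt.1 hj), T'.2.eq_zero _ _ (not_lt.1 hj)]

theorem restrict (hT : IsTableau L A T) (hL : Antitone L) (hle : ∀ r j, j < L r → T r j ≤ N)
    (hM : ∀ r j, j < M r ↔ j < L r ∧ T r j < N) :
    IsTableau M (Function.update A N 0) fun r j => if j < M r then T r j else 0 where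
  row_le i j₁ j₂ hj h := by
    rw [if_pos h, if_pos (hj.trans_lt h)]
    exact hT.row_le i j₁ j₂ hj ((hM _ _).1 h).1
  col_lt i₁ i₂ j hi h := by
    have hcol := hT.col_lt i₁ i₂ j hi ((hM _ _).1 h).1
    rw [if_pos h, if_pos ((hM _ _).2
      ⟨((hM _ _).1 h).1.trans_le (hL hi.le), hcol.trans ((hM _ _).1 h).2⟩)]
    exact hcol
  eq_zero i j h := if_neg (not_lt.2 h)
  card_eq k := by
    obtain rfl | hk := eq_or_ne k N
    · rw [Function.update_self]
      have : IsEmpty {c : ℕ × ℕ // c.2 < M c.1 ∧ (if c.2 < M c.1 then T c.1 c.2 else 0) = k} :=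
        ⟨fun ⟨c, h, hc⟩ => ((hM _ _).1 h).2.ne (by rwa [if_pos h] at hc)⟩
      exact Nat.card_of_isEmpty
    · rw [Function.update_of_ne hk, ← hT.card_eq k]
      refine Nat.card_congr (Equiv.subtypeEquivRight fun c => ?_)
      have := hle c.1 c.2
      have := hM c.1 c.2
      split_ifs <;> omega

theorem extend (hT : IsTableau M (Function.update A N 0) T) (hlt : ∀ r j, j < M r → T r j < N)
    (hL : Antitone L) (hlo : ∀ r, L (r + 1) ≤ M r) (hhi : ∀ r, M r ≤ L r)
    (hsize : Nat.card {c : ℕ × ℕ // M c.1 ≤ c.2 ∧ c.2 < L c.1} = A N) :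
    IsTableau L A fun r j => if j < M r then T r j else if j < L r then N else 0 where
  row_le i j₁ j₂ hj h := by
    have := hT.row_le i j₁ j₂ hj
    have := hlt i j₁
    split_ifs <;> omega
  col_lt i₁ i₂ j hi h := by
    have hj : j < M i₁ := h.trans_le ((hL hi).trans (hlo i₁))
    rw [if_pos hj]
    split_ifs with hj'
    · exact hT.col_lt i₁ i₂ j hi hj'
    · exact hlt i₁ j hj
  eq_zero i j h := by
    rw [if_neg (not_lt.2 ((hhi i).trans h)), if_neg (not_lt.2 h)]
  card_eq k := by
    obtain rfl | hk := eq_or_ne k N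
    · rw [← hsize]
      refine Nat.card_congr (Equiv.subtypeEquivRight fun c => ?_)
      have := hlt c.1 c.2
      split_ifs <;> omega
    · rw [← Function.update_of_ne hk 0 A, ← hT.card_eq k]
      refine Nat.card_congr (Equiv.subtypeEquivRight fun c => ?_)
      have := hhi c.1
      split_ifs <;> omega

/-- Removing the letters `N` from a tableau with letters at most `N` is inverse to filling the
skew shape `L / M` with the letter `N`. -/
def restrictEquiv (hL : Antitone L) (hle : ∀ T, IsTableau L A T → ∀ r j, j < L r → T r j ≤ N)
    (hlt : ∀ T, IsTableau M (Function.update A N 0) T → ∀ r j, j < M r → T r j < N)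
    (hlo : ∀ r, L (r + 1) ≤ M r) (hhi : ∀ r, M r ≤ L r)
    (hsize : Nat.card {c : ℕ × ℕ // M c.1 ≤ c.2 ∧ c.2 < L c.1} = A N) :
    {T : {T // IsTableau L A T} // ∀ r j, j < M r ↔ j < L r ∧ T.1 r j < N} ≃
      {T // IsTableau M (Function.update A N 0) T} where
  toFun T := ⟨_, T.1.2.restrict hL (hle _ T.1.2) T.2⟩
  invFun T := ⟨⟨_, T.2.extend (hlt _ T.2) hL hlo hhi hsize⟩, fun r j => by
    have := hlt _ T.2 r j
    have := hhi r
    dsimp only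
    split_ifs <;> omega⟩
  left_inv := by
    rintro ⟨⟨T, hT⟩, hM⟩
    refine Subtype.ext (Subtype.ext ?_)
    funext r j
    have := hle T hT r j
    have := hT.eq_zero r j
    have := hM r j
    dsimp only at *
    split_ifs <;> omega
  right_inv := by
    rintro ⟨T, hT⟩
    refine Subtype.ext ?_
    funext r j
    have := hT.eq_zero r j
    dsimp only
    split_ifs <;> omega

end IsTableau

/-- The shape formed by the cells of `T` with entries less than `N`: the `r`-th row is cut at the
first column outside `L` or with an entry at least `N`. -/
noncomputable def cutShape (N : ℕ) (L : ℕ → ℕ) (T : ℕ → ℕ → ℕ) (r : ℕ) : ℕ :=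
  sInf {j | L r ≤ j ∨ N ≤ T r j}

namespace IsTableau

theorem lt_cutShape_iff (hT : IsTableau L A T) (r j : ℕ) :
    j < cutShape N L T r ↔ j < L r ∧ T r j < N := by
  have hmem : L r ≤ cutShape N L T r ∨ N ≤ T r (cutShape N L T r) :=
    Nat.sInf_mem (s := {j | L r ≤ j ∨ N ≤ T r j}) ⟨L r, Or.inl le_rfl⟩
  constructor
  · intro h
    have : ¬(L r ≤ j ∨ N ≤ T r j) := Nat.notMem_of_lt_sInf h
    omega
  · intro h
    by_contra hle
    have := hT.row_le r (cutShape N L T r) j (not_lt.1 hle) h.1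
    omega

theorem cutShape_le (hT : IsTableau L A T) (r : ℕ) : cutShape N L T r ≤ L r := by
  by_contra h
  exact lt_irrefl _ ((hT.lt_cutShape_iff r _).1 (not_le.1 h)).1

theorem le_cutShape (hT : IsTableau L A T) (hL : Antitone L)
    (hle : ∀ r j, j < L r → T r j ≤ N) (r : ℕ) : L (r + 1) ≤ cutShape N L T r := by
  refine le_of_forall_lt fun j hj => (hT.lt_cutShape_iff r j).2 ⟨hj.trans_le (hL r.le_succ), ?_⟩
  exact (hT.col_lt r (r + 1) j r.lt_succ_self hj).trans_le (hle _ _ hj)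

theorem cutShape_eq_zero (hT : IsTableau L A T) (hL : Antitone L) {r : ℕ} (hr : N ≤ r) :
    cutShape N L T r = 0 := by
  by_contra h
  have h0 := (hT.lt_cutShape_iff r 0).1 (Nat.pos_of_ne_zero h)
  exact (hr.trans (hT.row_index_le hL h0.1)).not_gt h0.2

theorem card_skew_cutShape (hT : IsTableau L A T) (hle : ∀ r j, j < L r → T r j ≤ N) :
    Nat.card {c : ℕ × ℕ // cutShape N L T c.1 ≤ c.2 ∧ c.2 < L c.1} = A N := by
  rw [← hT.card_eq N]
  refine Nat.card_congr (Equiv.subtypeEquivRight fun c => ?_)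
  have := hT.lt_cutShape_iff (N := N) c.1 c.2
  have := hle c.1 c.2
  omega

end IsTableau

end Tableaux

section RevExtend

variable {N : ℕ}

/-- The sequence `a_{N-1}, …, a_0, 0, 0, …`: it turns weakly increasing vectors into partitions. -/
def revExtend (a : Fin N → ℕ) (r : ℕ) : ℕ :=
  if h : r < N then a (Fin.rev ⟨r, h⟩) else 0

theorem revExtend_of_le (a : Fin N → ℕ) {r : ℕ} (h : N ≤ r) : revExtend a r = 0 :=
  dif_neg (not_lt.2 h)

@[simp]
theorem revExtend_rev (a : Fin N → ℕ) (i : Fin N) : revExtend a i.rev = a i := by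
  rw [revExtend, dif_pos i.rev.isLt, Fin.eta, Fin.rev_rev]

theorem revExtend_eq_iff {a : Fin N → ℕ} {A : ℕ → ℕ} (hA : ∀ r, N ≤ r → A r = 0) :
    revExtend a = A ↔ ∀ i : Fin N, a i = A i.rev := by
  refine ⟨fun h i => by rw [← h, revExtend_rev], fun h => funext fun r => ?_⟩
  by_cases hr : r < N
  · rw [revExtend, dif_pos hr, h, Fin.rev_rev]
  · rw [revExtend_of_le _ (not_lt.1 hr), hA r (not_lt.1 hr)]

theorem revExtend_tail (a : Fin (N + 1) → ℕ) :
    revExtend (Fin.tail a) = Function.update (revExtend a) N 0 := by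
  refine (revExtend_eq_iff fun r hr => ?_).2 fun i => ?_
  · obtain rfl | hne := eq_or_ne r N
    · exact Function.update_self _ _ _
    · rw [Function.update_of_ne hne, revExtend_of_le _ (by omega)]
  · rw [Function.update_of_ne i.rev.isLt.ne, ← Fin.val_castSucc i.rev, ← Fin.rev_succ,
      revExtend_rev]
    rfl

theorem revExtend_last (a : Fin (N + 1) → ℕ) : revExtend a N = a 0 := by
  rw [← revExtend_rev a 0, Fin.rev_zero, Fin.val_last]

theorem antitone_revExtend {l : Fin N → ℕ} (hl : Monotone l) : Antitone (revExtend l) := by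
  intro r s hrs
  by_cases hs : s < N
  · rw [revExtend, revExtend, dif_pos hs, dif_pos (hrs.trans_lt hs)]
    exact hl (Fin.rev_le_rev.2 hrs)
  · rw [revExtend_of_le _ (not_lt.1 hs)]
    exact Nat.zero_le _

theorem mem_interlacing_iff_revExtend {l : Fin (N + 1) → ℕ} {μ : Fin N → ℕ} :
    μ ∈ interlacing l ↔
      ∀ r, revExtend l (r + 1) ≤ revExtend μ r ∧ revExtend μ r ≤ revExtend l r := by
  have hcell : ∀ i : Fin N, revExtend l (i.rev + 1) = l i.castSucc ∧
      revExtend l i.rev = l i.succ := by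
    intro i
    constructor
    · rw [← Fin.val_succ, ← Fin.rev_castSucc, revExtend_rev]
    · rw [← Fin.val_castSucc i.rev, ← Fin.rev_succ, revExtend_rev]
  rw [mem_interlacing]
  constructor
  · intro h r
    by_cases hr : r < N
    · have := hcell (Fin.rev ⟨r, hr⟩)
      simp only [Fin.rev_rev] at this
      rw [this.1, this.2, revExtend, dif_pos hr]
      exact h _
    · rw [revExtend_of_le l (by omega), revExtend_of_le μ (not_lt.1 hr)]
      exact ⟨le_rfl, Nat.zero_le _⟩
  · intro h i
    have := h i.rev
    rwa [(hcell i).1, (hcell i).2, revExtend_rev] at this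

theorem sum_revExtend_sub (l : Fin (N + 1) → ℕ) (μ : Fin N → ℕ) :
    ∑ r ∈ range (N + 1), (revExtend l r - revExtend μ r) =
      l 0 + ∑ j : Fin N, (l j.succ - μ j) := by
  rw [sum_range_succ, revExtend_last, revExtend_of_le μ le_rfl, Nat.sub_zero, add_comm,
    ← Fin.sum_univ_eq_sum_range fun r => revExtend l r - revExtend μ r,
    ← Equiv.sum_comp Fin.revPerm]
  refine congrArg _ (sum_congr rfl fun j _ => ?_)
  rw [Fin.revPerm_apply, revExtend_rev, ← Fin.val_castSucc j.rev, ← Fin.rev_succ, revExtend_rev]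

end RevExtend

section KostkaCoefficients

variable {N : ℕ}

theorem finSuccEquiv_rename_succ (P : MvPolynomial (Fin N) ℤ) :
    MvPolynomial.finSuccEquiv ℤ N (rename Fin.succ P) = Polynomial.C P := by
  induction P using MvPolynomial.induction_on with
  | C a => simp
  | add p q hp hq => rw [map_add, map_add, hp, hq, map_add]
  | mul_X p i hp => rw [map_mul, map_mul, hp, rename_X, finSuccEquiv_X_succ, map_mul]

theorem coeff_rename_succ_mul_X_zero_pow (P : MvPolynomial (Fin N) ℤ) (e : ℕ)
    (α : Fin (N + 1) → ℕ) :
    coeff (Finsupp.equivFunOnFinite.symm α) (rename Fin.succ P * X 0 ^ e) =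
      if α 0 = e then coeff (Finsupp.equivFunOnFinite.symm (Fin.tail α)) P else 0 := by
  have hα : Finsupp.equivFunOnFinite.symm α =
      Finsupp.cons (α 0) (Finsupp.equivFunOnFinite.symm (Fin.tail α)) := by
    ext i
    refine Fin.cases ?_ (fun i => ?_) i <;> simp [Fin.tail]
  rw [hα, ← finSuccEquiv_coeff_coeff, map_mul, map_pow, finSuccEquiv_X_zero,
    finSuccEquiv_rename_succ, Polynomial.coeff_C_mul_X_pow]
  split_ifs <;> simp

theorem coeff_branchingSchur_succ (l α : Fin (N + 1) → ℕ) :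
    coeff (Finsupp.equivFunOnFinite.symm α) (branchingSchur (N + 1) l) =
      ∑ μ ∈ interlacing l with α 0 = l 0 + ∑ j : Fin N, (l j.succ - μ j),
        coeff (Finsupp.equivFunOnFinite.symm (Fin.tail α)) (branchingSchur N μ) := by
  rw [branchingSchur, coeff_sum, sum_filter]
  simp only [coeff_rename_succ_mul_X_zero_pow]

theorem card_tableaux_zero : Nat.card {T // IsTableau 0 0 T} = 1 := by
  have huniq : ∀ T, IsTableau 0 0 T ↔ T = 0 := by
    refine fun T => ⟨fun hT => ?_, ?_⟩
    · funext r j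
      exact hT.eq_zero r j j.zero_le
    · rintro rfl
      exact ⟨by simp, by simp, by simp, by simp⟩
  simp only [huniq, Nat.card_unique]

theorem card_eq_sum_card_fiber {β γ : Type*} [Finite β] (f : β → γ) (s : Finset γ)
    (hf : ∀ b, f b ∈ s) : Nat.card β = ∑ c ∈ s, Nat.card {b // f b = c} := by
  classical
  have := Fintype.ofFinite β
  rw [Nat.card_eq_fintype_card, ← card_univ, card_eq_sum_card_fiberwise fun b _ => hf b]
  simp only [Nat.card_eq_fintype_card, Fintype.card_subtype]

theorem IsTableau.entry_lt_of_revExtend {l α : Fin N → ℕ} {T : ℕ → ℕ → ℕ}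
    (hT : IsTableau (revExtend l) (revExtend α) T) {r j : ℕ} (hj : j < revExtend l r) : T r j < N :=
  hT.entry_lt (fun _ => revExtend_of_le l) (fun _ => revExtend_of_le α) hj

/-- The shape left after removing the largest letter `N` from a tableau of shape `l`, as a weakly
increasing vector. -/
noncomputable def cutVec (l : Fin (N + 1) → ℕ) (T : ℕ → ℕ → ℕ) (i : Fin N) : ℕ :=
  cutShape N (revExtend l) T i.rev

variable {l α : Fin (N + 1) → ℕ} {T : ℕ → ℕ → ℕ}

theorem IsTableau.revExtend_cutVec (hT : IsTableau (revExtend l) (revExtend α) T)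
    (hl : Monotone l) : revExtend (cutVec l T) = cutShape N (revExtend l) T :=
  (revExtend_eq_iff fun _ => hT.cutShape_eq_zero (antitone_revExtend hl)).2 fun _ => rfl

theorem IsTableau.cutVec_eq_iff (hT : IsTableau (revExtend l) (revExtend α) T) (hl : Monotone l)
    (μ : Fin N → ℕ) :
    cutVec l T = μ ↔ ∀ r j, j < revExtend μ r ↔ j < revExtend l r ∧ T r j < N := by
  refine ⟨?_, fun h => ?_⟩
  · rintro rfl r j
    rw [hT.revExtend_cutVec hl, hT.lt_cutShape_iff]
  · funext i
    refine eq_of_forall_lt_iff fun j => ?_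
    rw [cutVec, ← revExtend_rev μ, hT.lt_cutShape_iff, h]

theorem IsTableau.cutVec_mem (hT : IsTableau (revExtend l) (revExtend α) T) (hl : Monotone l) :
    cutVec l T ∈ {μ ∈ interlacing l | α 0 = l 0 + ∑ j : Fin N, (l j.succ - μ j)} := by
  have hle : ∀ r j, j < revExtend l r → T r j ≤ N := fun r j hj =>
    Nat.le_of_lt_succ (hT.entry_lt_of_revExtend hj)
  rw [mem_filter, mem_interlacing_iff_revExtend, ← sum_revExtend_sub, hT.revExtend_cutVec hl,
    ← card_skew_cells fun r => revExtend_of_le l, hT.card_skew_cutShape hle, revExtend_last]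
  exact ⟨fun r => ⟨hT.le_cutShape (antitone_revExtend hl) hle r, hT.cutShape_le r⟩, rfl⟩

theorem card_cutVec_fiber (hl : Monotone l) {μ : Fin N → ℕ} (hμ : μ ∈ interlacing l)
    (hsize : α 0 = l 0 + ∑ j : Fin N, (l j.succ - μ j)) :
    Nat.card {T : {T // IsTableau (revExtend l) (revExtend α) T} // cutVec l T.1 = μ} =
      Nat.card {T // IsTableau (revExtend μ) (revExtend (Fin.tail α)) T} := by
  rw [mem_interlacing_iff_revExtend] at hμ
  rw [← sum_revExtend_sub, ← card_skew_cells fun r => revExtend_of_le l, ← revExtend_last α]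
    at hsize
  rw [Nat.card_congr (Equiv.subtypeEquivRight fun T => T.2.cutVec_eq_iff hl μ), revExtend_tail]
  refine Nat.card_congr (IsTableau.restrictEquiv (antitone_revExtend hl)
    (fun T hT r j hj => Nat.le_of_lt_succ (hT.entry_lt_of_revExtend hj)) (fun T hT r j hj => ?_)
    (fun r => (hμ r).1) (fun r => (hμ r).2) hsize.symm)
  rw [← revExtend_tail] at hT
  exact hT.entry_lt_of_revExtend hj

theorem card_tableaux_succ (hl : Monotone l) (α : Fin (N + 1) → ℕ) :
    Nat.card {T // IsTableau (revExtend l) (revExtend α) T} =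
      ∑ μ ∈ interlacing l with α 0 = l 0 + ∑ j : Fin N, (l j.succ - μ j),
        Nat.card {T // IsTableau (revExtend μ) (revExtend (Fin.tail α)) T} := by
  have := IsTableau.finite (fun r => revExtend_of_le l) fun k => revExtend_of_le α
  rw [card_eq_sum_card_fiber (fun T => cutVec l T.1) _ fun T => T.2.cutVec_mem hl]
  refine sum_congr rfl fun μ hμ => ?_
  rw [mem_filter] at hμ
  exact card_cutVec_fiber hl hμ.1 hμ.2

theorem card_tableaux_eq_coeff {l : Fin N → ℕ} (hl : Monotone l) (α : Fin N → ℕ) :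
    (Nat.card {T // IsTableau (revExtend l) (revExtend α) T} : ℤ) =
      coeff (Finsupp.equivFunOnFinite.symm α) (branchingSchur N l) := by
  induction N with
  | zero =>
    have hzero : ∀ a : Fin 0 → ℕ, revExtend a = 0 := fun a =>
      funext fun r => revExtend_of_le a r.zero_le
    rw [hzero, hzero, card_tableaux_zero, branchingSchur, coeff_one,
      if_pos (Subsingleton.elim _ _), Nat.cast_one]
  | succ N ih =>
    rw [card_tableaux_succ hl, coeff_branchingSchur_succ, Nat.cast_sum]
    exact sum_congr rfl fun μ hμ => ih (monotone_of_mem_interlacing hl (mem_filter.1 hμ).1) _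

end KostkaCoefficients

section Partitions

variable {N n : ℕ}

/-- The multiset of nonzero entries of an exponent vector, i.e. the partition whose monomial
symmetric polynomial contains `x ^ α`. -/
def nonzeroParts (α : Fin N → ℕ) : Multiset ℕ :=
  (univ.val.map α).filter (· ≠ 0)

theorem univ_val_map_eq_add (α : Fin N → ℕ) :
    univ.val.map α = nonzeroParts α + Multiset.replicate (N - (nonzeroParts α).card) 0 := by
  have hadd := Multiset.filter_add_not (fun x : ℕ => x ≠ 0) (univ.val.map α)
  have hzero : ((univ.val.map α).filter fun x => ¬x ≠ 0) = Multiset.replicate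
      ((univ.val.map α).filter fun x => ¬x ≠ 0).card 0 :=
    Multiset.eq_replicate_card.2 fun x hx => by simpa using (Multiset.mem_filter.1 hx).2
  have hcard := congrArg Multiset.card hadd
  rw [Multiset.card_add, Multiset.card_map, Finset.card_val, card_univ, Fintype.card_fin] at hcard
  rw [nonzeroParts, Nat.sub_eq_of_eq_add' hcard.symm, ← hzero, hadd]

theorem sum_nonzeroParts (α : Fin N → ℕ) : (nonzeroParts α).sum = ∑ i, α i := by
  rw [sum_eq_multiset_sum, univ_val_map_eq_add, Multiset.sum_add, Multiset.sum_replicate,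
    smul_zero, add_zero]

theorem nonzeroParts_comp_perm (α : Fin N → ℕ) (σ : Equiv.Perm (Fin N)) :
    nonzeroParts (α ∘ σ) = nonzeroParts α := by
  rw [nonzeroParts, ← Multiset.map_map, Multiset.map_univ_val_equiv, nonzeroParts]

theorem eq_of_nonzeroParts_eq {l m : Fin N → ℕ} (hl : Monotone l) (hm : Monotone m)
    (h : nonzeroParts l = nonzeroParts m) : l = m := by
  have hmap : univ.val.map l = univ.val.map m := by
    rw [univ_val_map_eq_add, univ_val_map_eq_add, h]
  rw [Fin.univ_val_map, Fin.univ_val_map, Multiset.coe_eq_coe] at hmap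
  exact List.ofFn_injective (hmap.eq_of_pairwise (fun a b _ _ => le_antisymm)
    hl.sortedLE_ofFn.pairwise hm.sortedLE_ofFn.pairwise)

theorem exists_parts_eq_nonzeroParts {α : Fin N → ℕ} (h : ∑ i, α i = n) :
    ∃ μ : Nat.Partition n, μ.parts = nonzeroParts α :=
  ⟨⟨nonzeroParts α, fun hi => Nat.pos_of_ne_zero (Multiset.mem_filter.1 hi).2,
    (sum_nonzeroParts α).trans h⟩, rfl⟩

theorem coe_sortedParts (μ : Nat.Partition n) : (sortedParts μ : Multiset ℕ) = μ.parts := by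
  rw [sortedParts, Multiset.coe_reverse, Multiset.sort_eq]

theorem sortedParts_pairwise (μ : Nat.Partition n) : (sortedParts μ).Pairwise (· ≥ ·) :=
  List.pairwise_reverse.2 (Multiset.pairwise_sort _ _)

theorem pos_of_mem_sortedParts {μ : Nat.Partition n} {x : ℕ} (h : x ∈ sortedParts μ) : 0 < x :=
  μ.parts_pos (by rwa [← coe_sortedParts])

theorem length_sortedParts_le (μ : Nat.Partition n) : (sortedParts μ).length ≤ n := by
  have hsum : (sortedParts μ).sum = n := by
    rw [← Multiset.sum_coe, coe_sortedParts, μ.parts_sum]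
  exact (List.length_le_sum_of_one_le _ fun _ => pos_of_mem_sortedParts).trans hsum.le

theorem antitone_getD {l : List ℕ} (h : l.Pairwise (· ≥ ·)) : Antitone fun i => l.getD i 0 := by
  intro i j hij
  dsimp only
  by_cases hj : j < l.length
  · rw [List.getD_eq_getElem _ _ hj, List.getD_eq_getElem _ _ (hij.trans_lt hj)]
    exact h.rel_get_of_le (a := ⟨i, hij.trans_lt hj⟩) (b := ⟨j, hj⟩) hij
  · rw [List.getD_eq_default _ _ (not_lt.1 hj)]
    exact Nat.zero_le _

/-- The parts of a partition as a weakly increasing vector of length `N`, padded with zeros on the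
left; parts beyond the `N` largest are lost. -/
def partVec (μ : Nat.Partition n) (N : ℕ) (i : Fin N) : ℕ :=
  (sortedParts μ).getD i.rev 0

theorem monotone_partVec (μ : Nat.Partition n) (N : ℕ) : Monotone (partVec μ N) :=
  fun _ _ hij => antitone_getD (sortedParts_pairwise μ) (Fin.rev_le_rev.2 hij)

theorem revExtend_partVec (μ : Nat.Partition n) (hN : n ≤ N) :
    revExtend (partVec μ N) = fun r => (sortedParts μ).getD r 0 :=
  (revExtend_eq_iff fun _ hr =>
    List.getD_eq_default _ _ ((length_sortedParts_le μ).trans (hN.trans hr))).2 fun _ => rfl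

theorem nonzeroParts_partVec (μ : Nat.Partition n) (hN : n ≤ N) :
    nonzeroParts (partVec μ N) = μ.parts := by
  have hlen : (sortedParts μ).length ≤ N := (length_sortedParts_le μ).trans hN
  have hlist : List.ofFn (fun i : Fin N => (sortedParts μ).getD i 0) =
      sortedParts μ ++ List.replicate (N - (sortedParts μ).length) 0 := by
    refine List.ext_getElem (by simp [hlen]) fun i _ _ => ?_
    rw [List.getElem_ofFn, List.getElem_append]
    split_ifs with hi
    · exact List.getD_eq_getElem _ _ hi
    · rw [List.getD_eq_default _ _ (not_lt.1 hi), List.getElem_replicate]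
  change nonzeroParts ((fun i : Fin N => (sortedParts μ).getD i 0) ∘ Fin.revPerm) = μ.parts
  rw [nonzeroParts_comp_perm, nonzeroParts, Fin.univ_val_map, hlist, ← Multiset.coe_add,
    Multiset.filter_add, Multiset.filter_eq_self.2, Multiset.filter_eq_nil.2, add_zero,
    coe_sortedParts]
  · intro x hx
    simpa using List.eq_of_mem_replicate hx
  · exact fun x hx => (pos_of_mem_sortedParts hx).ne'

theorem sum_partVec (μ : Nat.Partition n) (hN : n ≤ N) : ∑ i, partVec μ N i = n := by
  rw [← sum_nonzeroParts, nonzeroParts_partVec μ hN, μ.parts_sum]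

theorem exists_partVec_eq (hN : n ≤ N) {l : Fin N → ℕ} (hl : Monotone l) (hsum : ∑ i, l i = n) :
    ∃ μ : Nat.Partition n, partVec μ N = l := by
  obtain ⟨μ, hμ⟩ := exists_parts_eq_nonzeroParts hsum
  exact ⟨μ, eq_of_nonzeroParts_eq (monotone_partVec μ N) hl
    ((nonzeroParts_partVec μ hN).trans hμ)⟩

theorem partVec_injective (hN : n ≤ N) :
    Function.Injective fun μ : Nat.Partition n => partVec μ N := by
  intro μ ν h
  refine Nat.Partition.ext ?_
  rw [← nonzeroParts_partVec μ hN, ← nonzeroParts_partVec ν hN]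
  exact congrArg nonzeroParts h

end Partitions

section SchurPolynomials

variable {N n : ℕ}

theorem coeff_msymmList (μ : Nat.Partition n) (α : Fin N → ℕ) :
    coeff (Finsupp.equivFunOnFinite.symm α) (msymmList N n (sortedParts μ)) =
      if nonzeroParts α = μ.parts then 1 else 0 := by
  classical
  simp only [msymmList, coeff_sum, coeff_monomial, EmbeddingLike.apply_eq_iff_eq,
    Finset.sum_ite_eq', Finset.mem_filter, coe_sortedParts]
  refine if_congr (and_iff_right_of_imp fun h => ?_) rfl rfl
  have hsum : ∑ i, α i = n := by
    rw [← sum_nonzeroParts, ← μ.parts_sum]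
    exact congrArg Multiset.sum h
  refine Fintype.mem_piFinset.2 fun i => mem_range.2 (Nat.lt_succ_of_le ?_)
  exact hsum ▸ single_le_sum (fun j _ => Nat.zero_le (α j)) (mem_univ i)

theorem coeff_schurP (l : List ℕ) (μ : Nat.Partition n) {α : Fin N → ℕ}
    (h : nonzeroParts α = μ.parts) :
    coeff (Finsupp.equivFunOnFinite.symm α) (schurP N n l) = kostka l (sortedParts μ) := by
  simp only [schurP, coeff_sum, coeff_smul, coeff_msymmList, h, smul_eq_mul, mul_ite, mul_one,
    mul_zero, ← Nat.Partition.ext_iff, sum_ite_eq, mem_univ, if_true]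

theorem coeff_schurP_of_sum_ne (l : List ℕ) {α : Fin N → ℕ} (h : ∑ i, α i ≠ n) :
    coeff (Finsupp.equivFunOnFinite.symm α) (schurP N n l) = 0 := by
  rw [schurP, coeff_sum]
  refine sum_eq_zero fun μ _ => ?_
  rw [coeff_smul, coeff_msymmList, if_neg, smul_zero]
  intro hμ
  exact h (by rw [← sum_nonzeroParts, hμ, μ.parts_sum])

theorem kostka_eq_coeff_branchingSchur (hN : n ≤ N) (μ ν : Nat.Partition n) :
    (kostka (sortedParts μ) (sortedParts ν) : ℤ) =
      coeff (Finsupp.equivFunOnFinite.symm (partVec ν N)) (branchingSchur N (partVec μ N)) := by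
  rw [kostka_eq_card, ← revExtend_partVec μ hN, ← revExtend_partVec ν hN,
    card_tableaux_eq_coeff (monotone_partVec μ N)]

theorem coeff_comp_perm_of_isSymmetric {P : MvPolynomial (Fin N) ℤ} (hP : P.IsSymmetric)
    (α : Fin N → ℕ) (σ : Equiv.Perm (Fin N)) :
    coeff (Finsupp.equivFunOnFinite.symm (α ∘ σ)) P =
      coeff (Finsupp.equivFunOnFinite.symm α) P := by
  rw [← intCoeff_natCast, ← intCoeff_natCast]
  conv_rhs => rw [← hP σ, intCoeff_rename_comp]
  rfl

theorem schurP_eq_branchingSchur (hN : n ≤ N) (μ : Nat.Partition n) :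
    schurP N n (sortedParts μ) = branchingSchur N (partVec μ N) := by
  ext d
  obtain ⟨α, rfl⟩ := Finsupp.equivFunOnFinite.symm.surjective d
  by_cases hα : ∑ i, α i = n
  · obtain ⟨ν, hν⟩ := exists_parts_eq_nonzeroParts hα
    have hsort : partVec ν N = α ∘ Tuple.sort α :=
      eq_of_nonzeroParts_eq (monotone_partVec ν N) (Tuple.monotone_sort α) <| by
        rw [nonzeroParts_partVec ν hN, nonzeroParts_comp_perm, hν]
    rw [coeff_schurP _ ν hν.symm, kostka_eq_coeff_branchingSchur hN, hsort,
      coeff_comp_perm_of_isSymmetric (isSymmetric_branchingSchur (monotone_partVec μ N))]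
  · rw [coeff_schurP_of_sum_ne _ hα]
    refine ((isHomogeneous_branchingSchur _).coeff_eq_zero fun hd => hα ?_).symm
    rwa [sum_partVec μ hN, Finsupp.degree_eq_sum] at hd

end SchurPolynomials

section BetaSets

variable {N n : ℕ}

/-- The first-column hook lengths of the partitions of `n` with at most `N` parts: the vectors
`λ_{N-1} < λ_{N-2} + 1 < ⋯ < λ_0 + N - 1`. -/
structure IsBetaSet (β : Fin N → ℤ) (n : ℕ) : Prop where
  strictMono : StrictMono β
  nonneg : 0 ≤ β
  sum_eq : ∑ i, β i = ∑ i : Fin N, (i : ℤ) + n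

/-- The `β`-set of a partition in `N` variables, i.e. the exponent `λ + δ` in increasing order. -/
def betaVec (μ : Nat.Partition n) (N : ℕ) (i : Fin N) : ℤ :=
  partVec μ N i + i

theorem monotone_sub_val {β : Fin N → ℤ} (hβ : StrictMono β) : Monotone fun i => β i - (i : ℤ) := by
  cases N with
  | zero => exact fun i => i.elim0
  | succ N =>
    refine Fin.monotone_iff_le_succ.2 fun i => ?_
    have := hβ i.castSucc_lt_succ
    simp only [Fin.val_castSucc, Fin.val_succ]
    omega

namespace IsBetaSet

theorem le_sub_val {β : Fin (N + 1) → ℤ} (hβ : IsBetaSet β n) (i : Fin (N + 1)) :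
    β 0 ≤ β i - i := by
  simpa using monotone_sub_val hβ.strictMono (Fin.zero_le i)

theorem val_le {β : Fin N → ℤ} (hβ : IsBetaSet β n) (i : Fin N) : (i : ℤ) ≤ β i := by
  cases N with
  | zero => exact i.elim0
  | succ N =>
    have h0 : 0 ≤ β 0 := hβ.nonneg 0
    have := hβ.le_sub_val i
    omega

theorem le_of_zero_ne_zero {β : Fin (N + 1) → ℤ} (hβ : IsBetaSet β n) (h0 : β 0 ≠ 0) :
    N + 1 ≤ n := by
  have hpos : 0 < β 0 := (hβ.nonneg 0).lt_of_ne' h0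
  have hsum : ∑ _i : Fin (N + 1), (1 : ℤ) ≤ ∑ i, (β i - i) := by
    refine sum_le_sum fun i _ => ?_
    have := hβ.le_sub_val i
    omega
  rw [sum_sub_distrib, hβ.sum_eq, add_sub_cancel_left, sum_const, card_univ, Fintype.card_fin,
    nsmul_one] at hsum
  exact_mod_cast hsum

theorem tail {β : Fin (N + 1) → ℤ} (hβ : IsBetaSet β n) (h0 : β 0 = 0) :
    IsBetaSet (fun i => β i.succ - 1) n where
  strictMono i j hij := sub_lt_sub_right (hβ.strictMono (Fin.succ_lt_succ_iff.2 hij)) 1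
  nonneg i := by
    have := h0 ▸ hβ.strictMono i.succ_pos
    exact sub_nonneg.2 this
  sum_eq := by
    have hsum := hβ.sum_eq
    simp only [Fin.sum_univ_succ, h0, Fin.val_zero, Fin.val_succ, Nat.cast_add, Nat.cast_zero,
      Nat.cast_one, sum_add_distrib] at hsum
    rw [sum_sub_distrib]
    linarith

theorem sub_single {β : Fin N → ℤ} (hβ : IsBetaSet β (n + 1)) {i : Fin N}
    (hinj : Function.Injective (β - Pi.single i 1)) (h0 : 0 ≤ β - Pi.single i 1) :
    IsBetaSet (β - Pi.single i 1) n where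
  strictMono := by
    refine Monotone.strictMono_of_injective (fun j k hjk => ?_) hinj
    obtain rfl | hlt := hjk.eq_or_lt
    · exact le_rfl
    · have := hβ.strictMono hlt
      simp only [Pi.sub_apply, Pi.single_apply]
      split_ifs <;> omega
  nonneg := h0
  sum_eq := by
    simp only [Pi.sub_apply, sum_sub_distrib, hβ.sum_eq, sum_pi_single', mem_univ, if_true]
    push_cast
    ring

theorem exists_isBetaSet_sub_single {β : Fin N → ℤ} (hβ : IsBetaSet β (n + 1)) :
    ∃ i, IsBetaSet (β - Pi.single i 1) n := by
  have hne : ∃ i : Fin N, (i : ℤ) < β i := by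
    by_contra! hle
    have := hβ.sum_eq ▸ sum_le_sum fun i (_ : i ∈ univ) => hle i
    omega
  obtain ⟨i, hi, hmin⟩ := WellFounded.has_min wellFounded_lt {i : Fin N | (i : ℤ) < β i} hne
  have hbelow : ∀ j < i, β j < β i - 1 := by
    intro j hj
    have hβj : β j ≤ j := not_lt.1 fun h => hmin j h hj
    have hiβ : (i : ℤ) < β i := hi
    omega
  refine ⟨i, hβ.sub_single (StrictMono.injective fun j k hjk => ?_) fun j => ?_⟩
  · have := hβ.strictMono hjk
    obtain rfl | hk := eq_or_ne k i
    · have := hbelow j hjk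
      simp [hjk.ne, this]
    · simp only [Pi.sub_apply, Pi.single_apply, if_neg hk]
      split_ifs <;> omega
  · have hj := hβ.val_le j
    obtain rfl | hne := eq_or_ne j i
    · have : (j : ℤ) < β j := hi
      simp only [Pi.zero_apply, Pi.sub_apply, Pi.single_eq_same]
      omega
    · simp only [Pi.zero_apply, Pi.sub_apply, Pi.single_eq_of_ne hne]
      omega

theorem exists_betaVec_eq {β : Fin N → ℤ} (hN : n ≤ N) (hβ : IsBetaSet β n) :
    ∃ μ : Nat.Partition n, betaVec μ N = β := by
  have hnonneg : 0 ≤ fun i => β i - (i : ℤ) := fun i => sub_nonneg.2 (hβ.val_le i)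
  obtain ⟨l, hl⟩ := exists_natCast_eq hnonneg
  have hmono : Monotone l := fun i j hij => by
    have : β i - (i : ℤ) ≤ β j - (j : ℤ) := monotone_sub_val hβ.strictMono hij
    have hli : β i - (i : ℤ) = l i := congrFun hl i
    have hlj : β j - (j : ℤ) = l j := congrFun hl j
    omega
  have hsum : ∑ i, l i = n := by
    have : ∑ i, (l i : ℤ) = n := by
      rw [← hl, sum_sub_distrib, hβ.sum_eq, add_sub_cancel_left]
    exact_mod_cast this
  obtain ⟨μ, rfl⟩ := exists_partVec_eq hN hmono hsum
  exact ⟨μ, funext fun i => (eq_sub_iff_add_eq.1 (congrFun hl i).symm)⟩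

end IsBetaSet

theorem isBetaSet_betaVec (μ : Nat.Partition n) (hN : n ≤ N) : IsBetaSet (betaVec μ N) n where
  strictMono i j hij := add_lt_add_of_le_of_lt (Int.ofNat_le.2 (monotone_partVec μ N hij.le))
    (Int.ofNat_lt.2 hij)
  nonneg i := add_nonneg (Int.natCast_nonneg _) (Int.natCast_nonneg _)
  sum_eq := by
    simp only [betaVec, sum_add_distrib, ← Nat.cast_sum, sum_partVec μ hN]
    ring

theorem betaVec_injective (hN : n ≤ N) :
    Function.Injective fun μ : Nat.Partition n => betaVec μ N := by
  refine fun μ ν h => partVec_injective hN (funext fun i => ?_)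
  have := congrFun h i
  simpa only [betaVec, add_left_inj, Nat.cast_inj] using this

theorem betaVec_zero (μ : Nat.Partition n) (hN : n ≤ N) : betaVec μ (N + 1) 0 = 0 := by
  have : (sortedParts μ).length ≤ N := (length_sortedParts_le μ).trans hN
  simp [betaVec, partVec, this]

theorem betaVec_succ (μ : Nat.Partition n) (i : Fin N) :
    betaVec μ (N + 1) i.succ - 1 = betaVec μ N i := by
  simp [betaVec, partVec, Fin.rev_succ, ← add_assoc]

end BetaSets

section Expansion

variable {N n : ℕ}

theorem schurP_mul_vandermonde (hN : n ≤ N) (μ : Nat.Partition n) :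
    schurP N n (sortedParts μ) * vandermonde N = alternant fun i => partVec μ N i + i := by
  rw [schurP_eq_branchingSchur hN, alternant_eq_vandermonde_mul (monotone_partVec μ N), mul_comm]

theorem intCoeff_schurP_mul_vandermonde (hN : n ≤ N) (μ : Nat.Partition n) {γ : Fin N → ℤ}
    (hγ : StrictMono γ) :
    intCoeff (schurP N n (sortedParts μ) * vandermonde N) γ = if betaVec μ N = γ then 1 else 0 := by
  have hmono : StrictMono fun i => partVec μ N i + (i : ℕ) := fun i j hij =>
    add_lt_add_of_le_of_lt (monotone_partVec μ N hij.le) hij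
  rw [schurP_mul_vandermonde hN, intCoeff_alternant_of_strictMono hmono hγ]
  simp only [funext_iff, betaVec, Nat.cast_add, eq_comm]

theorem isSymmetric_schurP (hN : n ≤ N) (μ : Nat.Partition n) :
    (schurP N n (sortedParts μ)).IsSymmetric := by
  rw [schurP_eq_branchingSchur hN]
  exact isSymmetric_branchingSchur (monotone_partVec μ N)

theorem eq_sum_schurP {F : MvPolynomial (Fin N) ℤ} (hN : n ≤ N) (hF : F.IsSymmetric)
    (hdeg : F.IsHomogeneous n) :
    F = ∑ μ : Nat.Partition n,
      intCoeff (F * vandermonde N) (betaVec μ N) • schurP N n (sortedParts μ) := by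
  refine mul_right_cancel₀ (vandermonde_ne_zero N) ?_
  have hsymm : (∑ μ : Nat.Partition n, intCoeff (F * vandermonde N) (betaVec μ N) •
      schurP N n (sortedParts μ)).IsSymmetric :=
    (symmetricSubalgebra (Fin N) ℤ).sum_mem fun μ _ =>
      (symmetricSubalgebra (Fin N) ℤ).smul_mem (isSymmetric_schurP hN μ) _
  have hvand : IsAlternating (vandermonde N) := isAlternating_alternant _
  refine (hvand.symmetric_mul hF).ext_strictMono (hvand.symmetric_mul hsymm) fun γ hγ h0 => ?_
  simp only [sum_mul, smul_mul_assoc, intCoeff_sum, intCoeff_smul,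
    intCoeff_schurP_mul_vandermonde hN _ hγ, mul_ite, mul_one, mul_zero]
  by_cases hsum : ∑ i, γ i = ∑ i : Fin N, (i : ℤ) + n
  · obtain ⟨μ, rfl⟩ := IsBetaSet.exists_betaVec_eq hN ⟨hγ, h0, hsum⟩
    simp only [(betaVec_injective hN).eq_iff, sum_ite_eq', mem_univ, if_true]
  · rw [sum_eq_zero fun μ _ => if_neg fun hμ : betaVec μ N = γ =>
      hsum (hμ ▸ (isBetaSet_betaVec μ hN).sum_eq)]
    by_contra hne
    refine hsum ?_
    rw [sum_eq_of_intCoeff_ne_zero (hdeg.mul (isHomogeneous_alternant _)) hne]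
    push_cast
    ring

end Expansion

section Characters

variable {N n : ℕ}

theorem powerSum_cons (N r : ℕ) (l : List ℕ) :
    powerSum N (r :: l) = (∑ i : Fin N, X i ^ r) * powerSum N l := by
  rw [powerSum, List.map_cons, List.prod_cons, powerSum]

theorem isSymmetric_powerSum (N : ℕ) (l : List ℕ) : (powerSum N l).IsSymmetric :=
  (symmetricSubalgebra (Fin N) ℤ).list_prod_mem <|
    List.forall_mem_map.2 fun r _ => psum_isSymmetric (Fin N) ℤ r

theorem isHomogeneous_powerSum (N : ℕ) (l : List ℕ) : (powerSum N l).IsHomogeneous l.sum := by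
  induction l with
  | nil => exact isHomogeneous_one _ _
  | cons r l ih =>
    rw [powerSum_cons, List.sum_cons]
    refine (IsHomogeneous.sum _ _ _ fun i _ => ?_).mul ih
    simpa using (isHomogeneous_X ℤ i).pow r

/-- The coefficient of `x ^ γ` in `p_l Δ`, where `Δ` is the Vandermonde determinant. By Frobenius'
formula, at the `β`-set of a partition `λ` it is the irreducible character value `χ^λ(l)`. -/
noncomputable def frobeniusChar (l : List ℕ) (γ : Fin N → ℤ) : ℤ :=
  intCoeff (powerSum N l * vandermonde N) γ

theorem isAlternating_powerSum_mul (N : ℕ) (l : List ℕ) :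
    IsAlternating (powerSum N l * vandermonde N) :=
  (isAlternating_alternant _).symmetric_mul (isSymmetric_powerSum N l)

theorem injective_of_frobeniusChar_ne_zero {l : List ℕ} {γ : Fin N → ℤ}
    (h : frobeniusChar l γ ≠ 0) : Function.Injective γ :=
  (isAlternating_powerSum_mul N l).injective_of_intCoeff_ne_zero h

theorem frobeniusChar_comp_perm (l : List ℕ) (γ : Fin N → ℤ) (σ : Equiv.Perm (Fin N)) :
    frobeniusChar l (γ ∘ σ) = (Equiv.Perm.sign σ : ℤ) * frobeniusChar l γ :=
  (isAlternating_powerSum_mul N l).intCoeff_comp_perm γ σ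

theorem frobeniusChar_comp_swap (l : List ℕ) (γ : Fin N → ℤ) {a b : Fin N} (hab : a ≠ b) :
    frobeniusChar l (γ ∘ Equiv.swap a b) = -frobeniusChar l γ :=
  (isAlternating_powerSum_mul N l).intCoeff_comp_swap γ hab

theorem frobeniusChar_congr {l m : List ℕ} (h : l.Perm m) (γ : Fin N → ℤ) :
    frobeniusChar l γ = frobeniusChar m γ := by
  rw [frobeniusChar, powerSum, (h.map _).prod_eq, ← powerSum, frobeniusChar]

theorem frobeniusChar_cons (r : ℕ) (l : List ℕ) (γ : Fin N → ℤ) :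
    frobeniusChar (r :: l) γ = ∑ i, frobeniusChar l (γ - Pi.single i (r : ℤ)) := by
  rw [frobeniusChar, powerSum_cons, mul_assoc, intCoeff_powerSum_mul]
  rfl

theorem frobeniusChar_nil (γ : Fin N → ℤ) :
    frobeniusChar [] γ = (Matrix.of fun i j : Fin N => if γ i = j then (1 : ℤ) else 0).det := by
  rw [frobeniusChar, powerSum, List.map_nil, List.prod_nil, one_mul, vandermonde,
    intCoeff_alternant]

theorem sum_eq_of_frobeniusChar_ne_zero {l : List ℕ} {γ : Fin N → ℤ} (h : frobeniusChar l γ ≠ 0) :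
    ∑ i, γ i = ∑ i : Fin N, (i : ℤ) + l.sum := by
  rw [sum_eq_of_intCoeff_ne_zero ((isHomogeneous_powerSum N l).mul (isHomogeneous_alternant _)) h]
  push_cast
  ring

theorem frobeniusChar_eq_zero_of_neg (l : List ℕ) {γ : Fin N → ℤ} {i : Fin N} (h : γ i < 0) :
    frobeniusChar l γ = 0 :=
  intCoeff_of_not_nonneg _ fun h0 => (h0 i).not_gt h

/-- Adding a zero part to the shape does not change the character. -/
theorem frobeniusChar_tail {l : List ℕ} (hl : ∀ r ∈ l, 0 < r) {γ : Fin (N + 1) → ℤ}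
    (h0 : γ 0 = 0) : frobeniusChar l γ = frobeniusChar l fun i : Fin N => γ i.succ - 1 := by
  induction l generalizing γ with
  | nil =>
    rw [frobeniusChar_nil, frobeniusChar_nil, Matrix.det_succ_row_zero, Fin.sum_univ_succ,
      sum_eq_zero fun j _ => by
        simp [h0, show (0 : ℤ) ≠ (j : ℤ) + 1 by omega]]
    simp [h0, Matrix.submatrix, sub_eq_iff_eq_add]
  | cons r l ih =>
    rw [List.forall_mem_cons] at hl
    rw [frobeniusChar_cons, frobeniusChar_cons, Fin.sum_univ_succ,
      frobeniusChar_eq_zero_of_neg (i := 0) l (by simpa [h0] using hl.1), zero_add]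
    refine sum_congr rfl fun i _ => ?_
    rw [ih hl.2 (by simp [h0])]
    congr 1
    funext j
    simp [Pi.single_apply, sub_right_comm]

theorem frobeniusChar_betaVec {l : List ℕ} (hl : ∀ r ∈ l, 0 < r) (μ : Nat.Partition n)
    (hN : n ≤ N) : frobeniusChar l (betaVec μ N) = frobeniusChar l (betaVec μ n) := by
  induction N, hN using Nat.le_induction with
  | base => rfl
  | succ N hN ih => simp only [frobeniusChar_tail hl (betaVec_zero μ hN), betaVec_succ, ← ih]

theorem powerSum_eq_sum_frobeniusChar {l : List ℕ} (hl : ∀ r ∈ l, 0 < r) (hsum : l.sum = n)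
    (hN : n ≤ N) :
    powerSum N l =
      ∑ μ : Nat.Partition n, frobeniusChar l (betaVec μ n) • schurP N n (sortedParts μ) := by
  simp only [← frobeniusChar_betaVec hl _ hN]
  exact eq_sum_schurP hN (isSymmetric_powerSum N l) (hsum ▸ isHomogeneous_powerSum N l)

theorem exists_perm_of_injective {γ : Fin N → ℤ} (hinj : Function.Injective γ)
    (hmem : ∀ i, ∃ j : Fin N, γ i = j) :
    ∃ σ : Equiv.Perm (Fin N), γ = fun i => ((σ i : ℕ) : ℤ) := by
  choose s hs using hmem
  have hs_inj : Function.Injective s := fun a b hab => hinj (by rw [hs, hs, hab])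
  exact ⟨Equiv.ofBijective s (Finite.injective_iff_bijective.1 hs_inj), funext hs⟩

theorem exists_perm_of_frobeniusChar_nil_ne_zero {γ : Fin N → ℤ} (h : frobeniusChar [] γ ≠ 0) :
    ∃ σ : Equiv.Perm (Fin N), γ = fun i => ((σ i : ℕ) : ℤ) := by
  refine exists_perm_of_injective (injective_of_frobeniusChar_ne_zero h) fun i => ?_
  by_contra! hi
  rw [frobeniusChar_nil] at h
  exact h (Matrix.det_eq_zero_of_row_eq_zero i fun j => if_neg (hi j))

theorem abs_frobeniusChar_nil_le_one (γ : Fin N → ℤ) : |frobeniusChar [] γ| ≤ 1 := by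
  by_cases h : frobeniusChar [] γ = 0
  · simp [h]
  · obtain ⟨σ, rfl⟩ := exists_perm_of_frobeniusChar_nil_ne_zero h
    have hone : frobeniusChar [] (fun i : Fin N => (i : ℤ)) = 1 := by
      rw [frobeniusChar_nil, ← Matrix.det_one (n := Fin N)]
      congr 1
      ext i j
      simp [Matrix.one_apply, Fin.ext_iff]
    change |frobeniusChar [] ((fun i : Fin N => (i : ℤ)) ∘ σ)| ≤ 1
    rw [frobeniusChar_comp_perm, hone, mul_one, Int.isUnit_iff_abs_eq.1 (Units.isUnit _)]

end Characters

section TwoCycles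

variable {N : ℕ}

theorem lt_of_frobeniusChar_nil_ne_zero {γ : Fin N → ℤ} (h : frobeniusChar [] γ ≠ 0) (i : Fin N) :
    γ i < N := by
  obtain ⟨σ, rfl⟩ := exists_perm_of_frobeniusChar_nil_ne_zero h
  exact Int.ofNat_lt.2 (σ i).isLt

theorem exists_eq_of_frobeniusChar_nil_ne_zero {γ : Fin N → ℤ} (h : frobeniusChar [] γ ≠ 0)
    {z : ℤ} (h0 : 0 ≤ z) (hz : z < N) : ∃ i, γ i = z := by
  obtain ⟨σ, rfl⟩ := exists_perm_of_frobeniusChar_nil_ne_zero h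
  exact ⟨σ.symm ⟨z.toNat, by omega⟩, by simp [h0]⟩

theorem sum_sq_of_frobeniusChar_nil_ne_zero {γ : Fin N → ℤ} (h : frobeniusChar [] γ ≠ 0) :
    ∑ i, γ i ^ 2 = ∑ i : Fin N, (i : ℤ) ^ 2 := by
  obtain ⟨σ, rfl⟩ := exists_perm_of_frobeniusChar_nil_ne_zero h
  exact Equiv.sum_comp σ fun i : Fin N => ((i : ℕ) : ℤ) ^ 2

theorem frobeniusChar_pair (r s : ℕ) (β : Fin N → ℤ) :
    frobeniusChar [r, s] β =
      ∑ j, ∑ i, frobeniusChar [] (β - Pi.single j (r : ℤ) - Pi.single i (s : ℤ)) := by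
  simp only [frobeniusChar_cons]

theorem frobeniusChar_nil_sub_eq_zero_or {r s : ℕ} (hrs : r ≠ s) {β : Fin N → ℤ} {a b : Fin N}
    (hab : β a ≠ β b) :
    frobeniusChar [] (β - Pi.single a (r : ℤ) - Pi.single b (s : ℤ)) = 0 ∨
      frobeniusChar [] (β - Pi.single b (r : ℤ) - Pi.single a (s : ℤ)) = 0 := by
  by_contra! h
  have hne : a ≠ b := fun h => hab (congrArg β h)
  have hsq := (sum_sq_of_frobeniusChar_nil_ne_zero h.1).trans
    (sum_sq_of_frobeniusChar_nil_ne_zero h.2).symm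
  rw [← sub_eq_zero, ← sum_sub_distrib, ← sum_subset (subset_univ {a, b}), sum_pair hne] at hsq
  · simp only [Pi.sub_apply, Pi.single_eq_same, Pi.single_eq_of_ne hne,
      Pi.single_eq_of_ne hne.symm, sub_zero] at hsq
    have hprod : ((r : ℤ) - s) * (β a - β b) = 0 := by linarith
    obtain hr | hβ := mul_eq_zero.1 hprod
    · exact hrs (by omega)
    · exact hab (sub_eq_zero.1 hβ)
  · intro i _ hi
    simp only [mem_insert, mem_singleton, not_or] at hi
    simp [hi.1, hi.2]

/-- Two entries beyond the staircase must each lose one of the two cycles. -/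
theorem frobeniusChar_pair_of_two_le {β : Fin N → ℤ} {a b : Fin N} (hab : a ≠ b)
    (ha : (N : ℤ) ≤ β a) (hb : (N : ℤ) ≤ β b) (r s : ℕ) :
    frobeniusChar [r, s] β =
      frobeniusChar [] (β - Pi.single a (r : ℤ) - Pi.single b (s : ℤ)) +
        frobeniusChar [] (β - Pi.single b (r : ℤ) - Pi.single a (s : ℤ)) := by
  have hsupp : ∀ j i, frobeniusChar [] (β - Pi.single j (r : ℤ) - Pi.single i (s : ℤ)) ≠ 0 →
      (j, i) ∈ ({(a, b), (b, a)} : Finset (Fin N × Fin N)) := by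
    intro j i h
    have hlta := lt_of_frobeniusChar_nil_ne_zero h a
    have hltb := lt_of_frobeniusChar_nil_ne_zero h b
    simp only [Pi.sub_apply, Pi.single_apply] at hlta hltb
    simp only [mem_insert, mem_singleton, Prod.mk.injEq]
    grind
  rw [frobeniusChar_pair, ← sum_product', univ_product_univ,
    ← sum_subset (subset_univ {(a, b), (b, a)}), sum_pair (by simp [hab])]
  exact fun p _ hp => not_imp_comm.1 (hsupp p.1 p.2) hp

/-- Lowering another entry `i` can only be compensated by the large entry `a` landing on the old
value of `i`, which amounts to lowering `a` twice up to a transposition. -/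
theorem frobeniusChar_nil_sub_sub {β : Fin N → ℤ} (hβ : Function.Injective β) {a i : Fin N}
    (hia : i ≠ a) (h0 : 0 ≤ β i) (hi : β i < N) (r : ℕ) {s : ℕ} (hs : 0 < s) :
    frobeniusChar [] (β - Pi.single a (r : ℤ) - Pi.single i (s : ℤ)) =
      if β i = β a - r then
        -frobeniusChar [] (β - Pi.single a (r : ℤ) - Pi.single a (s : ℤ)) else 0 := by
  split_ifs with h
  · rw [← frobeniusChar_comp_swap _ _ hia]
    congr 1
    funext k
    simp only [Function.comp_apply, Equiv.swap_apply_def, Pi.sub_apply, Pi.single_apply]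
    grind
  · by_contra hne
    obtain ⟨k, hk⟩ := exists_eq_of_frobeniusChar_nil_ne_zero hne h0 hi
    simp only [Pi.sub_apply, Pi.single_apply] at hk
    have := @hβ k i
    grind

theorem sum_ite_eq_of_injective {ι : Type*} {f : ι → ℤ} (hf : Function.Injective f) (s : Finset ι)
    (z c : ℤ) : (∑ i ∈ s, if f i = z then c else 0) = 0 ∨
      (∑ i ∈ s, if f i = z then c else 0) = c := by
  by_cases hz : ∃ i ∈ s, f i = z
  · obtain ⟨i, hi, rfl⟩ := hz
    right
    rw [sum_eq_single_of_mem i hi fun j _ hj => if_neg fun h => hj (hf h), if_pos rfl]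
  · left
    exact sum_eq_zero fun i hi => if_neg fun h => hz ⟨i, hi, h⟩

theorem frobeniusChar_pair_of_one_le {β : Fin N → ℤ} (hβ : Function.Injective β) (h0 : 0 ≤ β)
    {a : Fin N} (ha : (N : ℤ) ≤ β a) (hlt : ∀ i ≠ a, β i < N) {r s : ℕ} (hr : 0 < r)
    (hs : 0 < s) :
    let e := frobeniusChar [] (β - Pi.single a (r : ℤ) - Pi.single a (s : ℤ))
    frobeniusChar [r, s] β = e + (∑ i ∈ univ.erase a, if β i = β a - r then -e else 0) +
      ∑ i ∈ univ.erase a, if β i = β a - s then -e else 0 := by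
  intro e
  have hoff : ∀ j ≠ a, ∀ i ≠ a,
      frobeniusChar [] (β - Pi.single j (r : ℤ) - Pi.single i (s : ℤ)) = 0 := by
    intro j hj i hi
    by_contra hne
    have := lt_of_frobeniusChar_nil_ne_zero hne a
    simp only [Pi.sub_apply, Pi.single_eq_of_ne hj.symm, Pi.single_eq_of_ne hi.symm] at this
    omega
  rw [frobeniusChar_pair, ← add_sum_erase _ _ (mem_univ a), ← add_sum_erase _ _ (mem_univ a)]
  congr 1
  · congr 1
    refine sum_congr rfl fun i hi => ?_
    have hia := ne_of_mem_erase hi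
    exact frobeniusChar_nil_sub_sub hβ hia (h0 i) (hlt i hia) r hs
  · refine sum_congr rfl fun j hj => ?_
    have hja := ne_of_mem_erase hj
    rw [sum_eq_single a (fun i _ hi => hoff j hja i hi) (by simp), sub_right_comm,
      frobeniusChar_nil_sub_sub hβ hja (h0 j) (hlt j hja) s hr, sub_right_comm]

theorem exists_le_of_frobeniusChar_ne_zero {l : List ℕ} (hl : 0 < l.sum) {β : Fin N → ℤ}
    (h : frobeniusChar l β ≠ 0) : ∃ a, (N : ℤ) ≤ β a := by
  by_contra! hlt
  have h0 : 0 ≤ β := nonneg_of_intCoeff_ne_zero h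
  have hmem : ∀ i, ∃ j : Fin N, β i = j := fun i =>
    have hi : 0 ≤ β i := h0 i
    have := hlt i
    ⟨⟨(β i).toNat, by omega⟩, (Int.toNat_of_nonneg hi).symm⟩
  obtain ⟨σ, rfl⟩ := exists_perm_of_injective (injective_of_frobeniusChar_ne_zero h) hmem
  have hsum := sum_eq_of_frobeniusChar_ne_zero h
  rw [Equiv.sum_comp σ fun i : Fin N => ((i : ℕ) : ℤ)] at hsum
  omega

theorem abs_frobeniusChar_pair_le_one {r s : ℕ} (hr : 0 < r) (hs : 0 < s) (hrs : r ≠ s)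
    (β : Fin N → ℤ) : |frobeniusChar [r, s] β| ≤ 1 := by
  by_cases hne : frobeniusChar [r, s] β = 0
  · simp [hne]
  have hβ := injective_of_frobeniusChar_ne_zero hne
  have h0 : 0 ≤ β := nonneg_of_intCoeff_ne_zero hne
  obtain ⟨a, ha⟩ := exists_le_of_frobeniusChar_ne_zero (by simp [hr]) hne
  by_cases hb : ∃ b ≠ a, (N : ℤ) ≤ β b
  · obtain ⟨b, hba, hb⟩ := hb
    rw [frobeniusChar_pair_of_two_le hba.symm ha hb]
    obtain h | h := frobeniusChar_nil_sub_eq_zero_or hrs (hβ.ne hba.symm)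
    · rw [h, zero_add]
      exact abs_frobeniusChar_nil_le_one _
    · rw [h, add_zero]
      exact abs_frobeniusChar_nil_le_one _
  · push Not at hb
    have hpair := frobeniusChar_pair_of_one_le hβ h0 ha hb hr hs
    set e := frobeniusChar [] (β - Pi.single a (r : ℤ) - Pi.single a (s : ℤ))
    have he : |e| ≤ 1 := abs_frobeniusChar_nil_le_one _
    have hsum_r := sum_ite_eq_of_injective hβ (univ.erase a) (β a - r) (-e)
    have hsum_s := sum_ite_eq_of_injective hβ (univ.erase a) (β a - s) (-e)
    rw [abs_le] at he ⊢
    omega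

end TwoCycles

section FourBoxes

variable {N : ℕ}

theorem frobeniusChar_one_cons_column {l : List ℕ} (hl : ∀ r ∈ l, 0 < r) :
    frobeniusChar (1 :: l) (fun i : Fin (N + 1) => (i : ℤ) + 1) =
      frobeniusChar l fun i : Fin N => (i : ℤ) + 1 := by
  rw [frobeniusChar_cons, Fin.sum_univ_succ, sum_eq_zero, add_zero,
    frobeniusChar_tail hl (by simp)]
  · simp
  · intro i _
    by_contra hne
    have := @injective_of_frobeniusChar_ne_zero _ _ _ hne i.castSucc i.succ
      (by simp [i.castSucc_lt_succ.ne])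
    exact i.castSucc_lt_succ.ne this

theorem IsBetaSet.four_induction {P : (N : ℕ) → (Fin N → ℤ) → Prop}
    (tail : ∀ N (γ : Fin (N + 1) → ℤ), γ 0 = 0 → P N (fun i => γ i.succ - 1) → P (N + 1) γ)
    (row : P 1 ![4]) (hook : P 2 ![1, 4]) (square : P 2 ![2, 3]) (coHook : P 3 ![1, 2, 4])
    (column : P 4 ![1, 2, 3, 4]) {β : Fin N → ℤ} (hβ : IsBetaSet β 4) : P N β := by
  induction N with
  | zero => simpa using hβ.sum_eq
  | succ N ih =>
    by_cases h0 : β 0 = 0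
    · exact tail N β h0 (ih (hβ.tail h0))
    · have hpos : 0 < β 0 := (hβ.nonneg 0).lt_of_ne' h0
      have hN := hβ.le_of_zero_ne_zero h0
      have hlt : ∀ i j, i < j → β i < β j := fun i j hij => hβ.strictMono hij
      obtain rfl | rfl | rfl | rfl : N = 0 ∨ N = 1 ∨ N = 2 ∨ N = 3 := by omega
      · have hsum : β 0 = 4 := by simpa [Fin.sum_univ_succ] using hβ.sum_eq
        have hβ_eq : β = ![β 0] := (FinVec.etaExpand_eq β).symm
        rw [hβ_eq, hsum]
        exact row
      · have hsum : β 0 + β 1 = 1 + 4 := by simpa [Fin.sum_univ_succ] using hβ.sum_eq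
        have hβ_eq : β = ![β 0, β 1] := (FinVec.etaExpand_eq β).symm
        have := hlt 0 1 (by decide)
        obtain h | h : β 0 = 1 ∧ β 1 = 4 ∨ β 0 = 2 ∧ β 1 = 3 := by omega
        · rw [hβ_eq, h.1, h.2]
          exact hook
        · rw [hβ_eq, h.1, h.2]
          exact square
      · have hsum : β 0 + (β 1 + β 2) = 1 + 2 + 4 := by
          simpa [Fin.sum_univ_succ] using hβ.sum_eq
        have hβ_eq : β = ![β 0, β 1, β 2] := (FinVec.etaExpand_eq β).symm
        have := hlt 0 1 (by decide)
        have := hlt 1 2 (by decide)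
        rw [hβ_eq, show β 0 = 1 by omega, show β 1 = 2 by omega, show β 2 = 4 by omega]
        exact coHook
      · have hsum : β 0 + (β 1 + (β 2 + β 3)) = 1 + (2 + 3) + 4 := by
          simpa [Fin.sum_univ_succ] using hβ.sum_eq
        have hβ_eq : β = ![β 0, β 1, β 2, β 3] := (FinVec.etaExpand_eq β).symm
        have := hlt 0 1 (by decide)
        have := hlt 1 2 (by decide)
        have := hlt 2 3 (by decide)
        rw [hβ_eq, show β 0 = 1 by omega, show β 1 = 2 by omega, show β 2 = 3 by omega,
          show β 3 = 4 by omega]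
        exact column

theorem neg_one_le_frobeniusChar_two_two {β : Fin N → ℤ} (hβ : IsBetaSet β 4) :
    -1 ≤ frobeniusChar [2, 2] β := by
  refine hβ.four_induction (P := fun _ γ => -1 ≤ frobeniusChar [2, 2] γ)
    ?tail ?row ?hook ?square ?coHook ?column
  case tail =>
    intro M γ h0 h
    rwa [frobeniusChar_tail (by simp) h0]
  all_goals
    simp only [frobeniusChar_cons, frobeniusChar_nil]
    decide +kernel

theorem neg_one_le_frobeniusChar_two {m : ℕ} (hm : 2 ≤ m) {β : Fin N → ℤ}
    (hβ : IsBetaSet β (m + 2)) : -1 ≤ frobeniusChar [m, 2] β := by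
  obtain rfl | hne := eq_or_ne m 2
  · exact neg_one_le_frobeniusChar_two_two hβ
  · exact (abs_le.1 (abs_frobeniusChar_pair_le_one (by omega) two_pos hne β)).1

/-- The coefficient at `γ` of `p_1 ^ k (p_1 ^ 4 + p_2 p_1 ^ 2 + p_2 ^ 2) Δ`: the part of the Schur
coefficient contributed by the identity and the products of one or two disjoint transpositions. -/
noncomputable def involutionSum (k : ℕ) (γ : Fin N → ℤ) : ℤ :=
  frobeniusChar (List.replicate (k + 4) 1) γ + frobeniusChar (2 :: List.replicate (k + 2) 1) γ +
    frobeniusChar (2 :: 2 :: List.replicate k 1) γ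

theorem involutionSum_tail (k : ℕ) {γ : Fin (N + 1) → ℤ} (h0 : γ 0 = 0) :
    involutionSum k γ = involutionSum k fun i : Fin N => γ i.succ - 1 := by
  simp only [involutionSum]
  rw [frobeniusChar_tail (by simp) h0, frobeniusChar_tail (by simp) h0,
    frobeniusChar_tail (by simp) h0]

theorem involutionSum_succ (k : ℕ) (γ : Fin N → ℤ) :
    involutionSum (k + 1) γ = ∑ i, involutionSum k (γ - Pi.single i 1) := by
  have hcons : ∀ l, frobeniusChar (1 :: l) γ = ∑ i, frobeniusChar l (γ - Pi.single i 1) :=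
    fun l => frobeniusChar_cons 1 l γ
  have hswap : ∀ l, frobeniusChar (2 :: 1 :: l) γ = frobeniusChar (1 :: 2 :: l) γ :=
    fun l => frobeniusChar_congr (List.Perm.swap 1 2 l) γ
  have hrotate : ∀ l, frobeniusChar (2 :: 2 :: 1 :: l) γ = frobeniusChar (1 :: 2 :: 2 :: l) γ :=
    fun l => frobeniusChar_congr (List.perm_middle (l₁ := [2, 2])) γ
  simp only [involutionSum, sum_add_distrib]
  rw [add_right_comm k 1 4, add_right_comm k 1 2, List.replicate_succ (n := k + 4),
    List.replicate_succ (n := k + 2), List.replicate_succ (n := k), hswap, hrotate, hcons, hcons,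
    hcons]

theorem one_le_involutionSum_zero {β : Fin N → ℤ} (hβ : IsBetaSet β 4) :
    1 ≤ involutionSum 0 β := by
  refine hβ.four_induction (P := fun _ γ => 1 ≤ involutionSum 0 γ)
    ?tail ?row ?hook ?square ?coHook ?column
  case tail =>
    intro M γ h0 h
    rwa [involutionSum_tail 0 h0]
  case column =>
    have hcol : ![1, 2, 3, 4] = fun i : Fin 4 => (i : ℤ) + 1 := by decide
    have hperm : [2, 1, 1].Perm [1, 1, 2] := by decide
    simp only [involutionSum, List.replicate]
    rw [hcol, frobeniusChar_congr hperm, frobeniusChar_one_cons_column (by simp),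
      frobeniusChar_one_cons_column (by simp)]
    simp only [frobeniusChar_cons, frobeniusChar_nil]
    decide +kernel
  all_goals
    simp only [involutionSum, List.replicate, frobeniusChar_cons, frobeniusChar_nil]
    decide +kernel

theorem involutionSum_eq_zero_of_not_isBetaSet {k n : ℕ} {β : Fin N → ℤ} (hβ : IsBetaSet β (n + 1))
    {i : Fin N} (h : ¬IsBetaSet (β - Pi.single i 1) n) :
    involutionSum k (β - Pi.single i 1) = 0 := by
  have hzero : ∀ l, frobeniusChar l (β - Pi.single i 1) = 0 := by
    intro l
    by_contra hne
    exact h (hβ.sub_single (injective_of_frobeniusChar_ne_zero hne)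
      (nonneg_of_intCoeff_ne_zero hne))
  simp only [involutionSum, hzero, add_zero]

theorem one_le_involutionSum {k : ℕ} {β : Fin N → ℤ} (hβ : IsBetaSet β (k + 4)) :
    1 ≤ involutionSum k β := by
  induction k generalizing β with
  | zero => exact one_le_involutionSum_zero hβ
  | succ k ih =>
    have hβ' : IsBetaSet β (k + 4 + 1) := by rwa [add_right_comm]
    rw [involutionSum_succ]
    refine Int.add_one_le_of_lt (sum_pos' (fun i _ => ?_) ?_)
    · by_cases h : IsBetaSet (β - Pi.single i 1) (k + 4)
      · exact zero_le_one.trans (ih h)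
      · exact (involutionSum_eq_zero_of_not_isBetaSet hβ' h).ge
    · obtain ⟨i, hi⟩ := hβ'.exists_isBetaSet_sub_single
      exact ⟨i, mem_univ i, ih hi⟩

end FourBoxes

theorem schur_positive_interval_row_general (n : ℕ) (hn : 4 ≤ n) :
    ∃ c : Nat.Partition n → ℕ, ∀ N, n ≤ N →
      powerSum N (List.replicate n 1) + powerSum N (2 :: List.replicate (n - 2) 1) +
          powerSum N (2 :: 2 :: List.replicate (n - 4) 1) + powerSum N [n - 2, 2] =
        ∑ μ : Nat.Partition n, (c μ : ℤ) • schurP N n (sortedParts μ) := by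
  obtain ⟨k, rfl⟩ := Nat.exists_eq_add_of_le' hn
  have hnonneg (μ : Nat.Partition (k + 4)) :
      0 ≤ involutionSum k (betaVec μ (k + 4)) + frobeniusChar [k + 2, 2] (betaVec μ (k + 4)) := by
    have hβ := isBetaSet_betaVec μ le_rfl
    have h₁ := one_le_involutionSum hβ
    have h₂ := neg_one_le_frobeniusChar_two (m := k + 2) (by omega) hβ
    omega
  choose c hc using fun μ => Int.eq_ofNat_of_zero_le (hnonneg μ)
  refine ⟨c, fun N hN => ?_⟩
  have hfrob (l : List ℕ) (hl : ∀ r ∈ l, 0 < r) (hsum : l.sum = k + 4) :=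
    powerSum_eq_sum_frobeniusChar hl hsum hN
  rw [Nat.add_sub_cancel, show k + 4 - 2 = k + 2 from rfl, hfrob (List.replicate (k + 4) 1),
    hfrob (2 :: List.replicate (k + 2) 1), hfrob (2 :: 2 :: List.replicate k 1), hfrob [k + 2, 2]]
  · simp only [← hc, involutionSum, add_smul, sum_add_distrib]
  all_goals simp
  all_goals omega

/-- For `n ≥ 9`, the symmetric function
`p_{(1^n)} + p_{(2,1^{n-2})} + p_{(2,2,1^{n-4})} + p_{(n-2,2)}` is Schur-positive. -/
theorem schur_positive_interval_row (n : ℕ) (hn : 9 ≤ n) :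
    ∃ c : Nat.Partition n → ℕ, ∀ N, n ≤ N →
      powerSum N (List.replicate n 1) + powerSum N (2 :: List.replicate (n - 2) 1) +
          powerSum N (2 :: 2 :: List.replicate (n - 4) 1) + powerSum N [n - 2, 2] =
        ∑ μ : Nat.Partition n, (c μ : ℤ) • schurP N n (sortedParts μ) := by
  exact schur_positive_interval_row_general n (by omega)
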